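/- Let A be a connected Nakayama algebra which is Gorenstein (the left regular module has finite injective dimension and the minimal injective cogenerator has finite projective dimension) and has infinite global dimension. Then fin-pro A is even. -/

import Mathlib

open CategoryTheory CategoryTheory.Limits

noncomputable section

namespace ArtinAlg

variable (A : Type) [Ring A]

/-- `M` admits a projective resolution of length at most `n`. -/
inductive ProjDimLE : ℕ → ModuleCat.{0} A → Prop
  | zero (M : ModuleCat.{0} A) (h : Projective M) : ProjDimLE 0 M
  | succ (n : ℕ) (M P : ModuleCat.{0} A) (f : P ⟶ M) (hP : Projective P) (hf : Epi f)
      (h : ProjDimLE n (kernel f)) : ProjDimLE (n + 1) M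

/-- `M` admits an injective coresolution of length at most `n`. -/
inductive InjDimLE : ℕ → ModuleCat.{0} A → Prop
  | zero (M : ModuleCat.{0} A) (h : Injective M) : InjDimLE 0 M
  | succ (n : ℕ) (M I : ModuleCat.{0} A) (f : M ⟶ I) (hI : Injective I) (hf : Mono f)
      (h : InjDimLE n (cokernel f)) : InjDimLE (n + 1) M

/-- The projective dimension `pd M ∈ ℕ∞`. -/
def projDim (M : ModuleCat.{0} A) : ℕ∞ :=
  sInf {d : ℕ∞ | ∃ n : ℕ, d = n ∧ ProjDimLE A n M}

/-- The injective dimension `id M ∈ ℕ∞`. -/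
def injDim (M : ModuleCat.{0} A) : ℕ∞ :=
  sInf {d : ℕ∞ | ∃ n : ℕ, d = n ∧ InjDimLE A n M}

/-- `f : P ⟶ M` is a projective cover: `P` is projective and `f` is an essential
(superfluous) epimorphism. -/
def IsProjectiveCoverHom {P M : ModuleCat.{0} A} (f : P ⟶ M) : Prop :=
  Projective P ∧ Epi f ∧ ∀ (N : ModuleCat.{0} A) (g : N ⟶ P), Epi (g ≫ f) → Epi g

/-- `P` is a projective cover of `M`. -/
def IsProjCoverOf (M P : ModuleCat.{0} A) : Prop :=
  ∃ f : P ⟶ M, IsProjectiveCoverHom A f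

/-- `f : M ⟶ I` is an injective envelope: `I` is injective and `f` is an essential
monomorphism. -/
def IsInjectiveEnvelopeHom {M I : ModuleCat.{0} A} (f : M ⟶ I) : Prop :=
  Injective I ∧ Mono f ∧ ∀ (N : ModuleCat.{0} A) (g : I ⟶ N), Mono (f ≫ g) → Mono g

/-- `I` is an injective envelope of `M`. -/
def IsInjEnvOf (M I : ModuleCat.{0} A) : Prop :=
  ∃ f : M ⟶ I, IsInjectiveEnvelopeHom A f

/-- `X ≅ Ω M`, the kernel of a projective cover of `M`. -/
def IsSyzygyOf (M X : ModuleCat.{0} A) : Prop :=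
  ∃ (P : ModuleCat.{0} A) (f : P ⟶ M), IsProjectiveCoverHom A f ∧ Nonempty (X ≅ kernel f)

/-- `X ≅ Σ M`, the cokernel of an injective envelope of `M`. -/
def IsCosyzygyOf (M X : ModuleCat.{0} A) : Prop :=
  ∃ (I : ModuleCat.{0} A) (f : M ⟶ I), IsInjectiveEnvelopeHom A f ∧ Nonempty (X ≅ cokernel f)

/-- `X ≅ Ω^n M`. -/
def IsNthSyzygy : ℕ → ModuleCat.{0} A → ModuleCat.{0} A → Prop
  | 0, M, X => Nonempty (X ≅ M)
  | n + 1, M, X => ∃ Y, IsSyzygyOf A M Y ∧ IsNthSyzygy n Y X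

/-- `X ≅ Σ^n M`. -/
def IsNthCosyzygy : ℕ → ModuleCat.{0} A → ModuleCat.{0} A → Prop
  | 0, M, X => Nonempty (X ≅ M)
  | n + 1, M, X => ∃ Y, IsCosyzygyOf A M Y ∧ IsNthCosyzygy n Y X

/-- `X` is a direct summand of `Y`. -/
def IsDirectSummandOf (X Y : ModuleCat.{0} A) : Prop :=
  ∃ (i : X ⟶ Y) (r : Y ⟶ X), i ≫ r = 𝟙 X

/-- `X ∈ add W` : `X` is a direct summand of a finite direct sum of copies of `W`. -/
def InAdd (X W : ModuleCat.{0} A) : Prop :=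
  ∃ n : ℕ, IsDirectSummandOf A X (ModuleCat.of A (Fin n → ↥W))

/-- The delooping level of `M` is at most `d` :
`Ω^d M ∈ add (A ⊕ Ω^{d+1} M')` for some finitely generated `M'`. -/
def DelLE (d : ℕ) (M : ModuleCat.{0} A) : Prop :=
  ∃ X, IsNthSyzygy A d M X ∧
    ∃ M' : ModuleCat.{0} A, Module.Finite A ↥M' ∧
      ∃ X', IsNthSyzygy A (d + 1) M' X' ∧ InAdd A X (ModuleCat.of A (A × ↥X'))

/-- The delooping level `del M ∈ ℕ∞`. -/
def delLevel (M : ModuleCat.{0} A) : ℕ∞ :=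
  sInf {d : ℕ∞ | ∃ n : ℕ, d = n ∧ DelLE A n M}

/-- The delooping level of the algebra: the supremum of `del S` over the simple modules. -/
def delAlg : ℕ∞ :=
  sSup {d : ℕ∞ | ∃ S : ModuleCat.{0} A, IsSimpleModule A ↥S ∧ delLevel A S = d}

/-- `Q` is a minimal injective cogenerator: the injective envelope of the direct sum of
a complete set of representatives of the simple modules. -/
def IsMinimalInjectiveCogenerator (Q : ModuleCat.{0} A) : Prop :=
  ∃ (ι : Type) (_ : Fintype ι) (S : ι → ModuleCat.{0} A),
    (∀ i, IsSimpleModule A ↥(S i)) ∧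
    (∀ T : ModuleCat.{0} A, IsSimpleModule A ↥T → ∃! i, Nonempty (↥T ≃ₗ[A] ↥(S i))) ∧
    IsInjEnvOf A (ModuleCat.of A (∀ i, ↥(S i))) Q

/-- The desuspending level of `M` is at most `d` :
`Σ^d M ∈ add (D(A) ⊕ Σ^{d+1} M')` for some finitely generated `M'`. -/
def DesLE (d : ℕ) (M : ModuleCat.{0} A) : Prop :=
  ∃ X, IsNthCosyzygy A d M X ∧
    ∃ Q, IsMinimalInjectiveCogenerator A Q ∧
      ∃ M' : ModuleCat.{0} A, Module.Finite A ↥M' ∧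
        ∃ X', IsNthCosyzygy A (d + 1) M' X' ∧ InAdd A X (ModuleCat.of A (↥Q × ↥X'))

/-- The desuspending level `des M ∈ ℕ∞`. -/
def desLevel (M : ModuleCat.{0} A) : ℕ∞ :=
  sInf {d : ℕ∞ | ∃ n : ℕ, d = n ∧ DesLE A n M}

/-- The desuspending level of the algebra. -/
def desAlg : ℕ∞ :=
  sSup {d : ℕ∞ | ∃ S : ModuleCat.{0} A, IsSimpleModule A ↥S ∧ desLevel A S = d}

/-- The (small) finitistic projective dimension `fin-pro A`. -/
def finProDim : ℕ∞ :=
  sSup {d : ℕ∞ | ∃ M : ModuleCat.{0} A, Module.Finite A ↥M ∧ projDim A M = d ∧ d ≠ ⊤}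

/-- The (small) finitistic injective dimension `fin-inj A`. -/
def finInjDim : ℕ∞ :=
  sSup {d : ℕ∞ | ∃ M : ModuleCat.{0} A, Module.Finite A ↥M ∧ injDim A M = d ∧ d ≠ ⊤}

/-- The big finitistic projective dimension `Fin-pro A`. -/
def bigFinProDim : ℕ∞ :=
  sSup {d : ℕ∞ | ∃ M : ModuleCat.{0} A, projDim A M = d ∧ d ≠ ⊤}

/-- The big finitistic injective dimension `Fin-inj A`. -/
def bigFinInjDim : ℕ∞ :=
  sSup {d : ℕ∞ | ∃ M : ModuleCat.{0} A, injDim A M = d ∧ d ≠ ⊤}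

/-- `M` is an indecomposable nonzero module. -/
def Indec (M : ModuleCat.{0} A) : Prop :=
  Nontrivial ↥M ∧ ∀ (N₁ N₂ : Submodule A ↥M), IsCompl N₁ N₂ → N₁ = ⊥ ∨ N₂ = ⊥

/-- `M` is serial (uniserial): its submodules form a chain. -/
def IsUniserial (M : ModuleCat.{0} A) : Prop :=
  ∀ N₁ N₂ : Submodule A ↥M, N₁ ≤ N₂ ∨ N₂ ≤ N₁

/-- `A` is a Nakayama algebra: all finitely generated indecomposable modules are serial. -/
def IsNakayama : Prop :=
  ∀ M : ModuleCat.{0} A, Module.Finite A ↥M → Indec A M → IsUniserial A M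

/-- `A` is connected: it is not a nontrivial product of algebras. -/
def IsConnectedAlgebra : Prop :=
  Nontrivial A ∧ ∀ e : A, IsIdempotentElem e → e ∈ Set.center A → e = 0 ∨ e = 1

/-- `A` is a cyclic Nakayama algebra: connected Nakayama with no simple projective module. -/
def IsCyclicNakayama : Prop :=
  IsNakayama A ∧ IsConnectedAlgebra A ∧
    ¬ ∃ S : ModuleCat.{0} A, IsSimpleModule A ↥S ∧ Projective S

/-- `T ≅ top M` (and `top M` is simple): there is an essential epimorphism `M ⟶ T`. -/
def IsSimpleTopOf (M T : ModuleCat.{0} A) : Prop :=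
  IsSimpleModule A ↥T ∧
    ∃ f : M ⟶ T, Epi f ∧ ∀ (N : ModuleCat.{0} A) (g : N ⟶ M), Epi (g ≫ f) → Epi g

/-- `S ≅ soc M` (and `soc M` is simple): there is an essential monomorphism `S ⟶ M`. -/
def IsSimpleSocOf (M S : ModuleCat.{0} A) : Prop :=
  IsSimpleModule A ↥S ∧
    ∃ f : S ⟶ M, Mono f ∧ ∀ (N : ModuleCat.{0} A) (g : M ⟶ N), Mono (f ≫ g) → Mono g

/-- `0 ⟶ N ⟶ E ⟶ M ⟶ 0` is an almost split (Auslander-Reiten) sequence. -/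
def IsAlmostSplitSeq {N E M : ModuleCat.{0} A} (f : N ⟶ E) (g : E ⟶ M) : Prop :=
  Mono f ∧ Epi g ∧ (∃ w : f ≫ g = 0, (ShortComplex.mk f g w).Exact) ∧
  (¬ ∃ s : M ⟶ E, s ≫ g = 𝟙 M) ∧ Indec A N ∧ Indec A M ∧
  ∀ (X : ModuleCat.{0} A) (h : X ⟶ M), (¬ ∃ s : M ⟶ X, s ≫ h = 𝟙 M) → ∃ h' : X ⟶ E, h' ≫ g = h

/-- `N ≅ τ M`, the Auslander-Reiten translate of `M` : there is an almost split sequence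
`0 ⟶ N ⟶ E ⟶ M ⟶ 0`. -/
def IsTauOf (N M : ModuleCat.{0} A) : Prop :=
  ∃ (E : ModuleCat.{0} A) (f : N ⟶ E) (g : E ⟶ M), IsAlmostSplitSeq A f g

/-- `U ≅ ψ S = τ⁻ top (I S)`. -/
def IsPsiOf (S U : ModuleCat.{0} A) : Prop :=
  ∃ I, IsInjEnvOf A S I ∧ ∃ T, IsSimpleTopOf A I T ∧ IsTauOf A T U

/-- `T ≅ γ S = τ soc (P S)`. -/
def IsGammaOf (S T : ModuleCat.{0} A) : Prop :=
  ∃ P, IsProjCoverOf A S P ∧ ∃ U, IsSimpleSocOf A P U ∧ IsTauOf A T U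

/-- `T ≅ φ S = top (I S)`. -/
def IsPhiOf (S T : ModuleCat.{0} A) : Prop :=
  ∃ I, IsInjEnvOf A S I ∧ IsSimpleTopOf A I T

/-- There is a `ψ`-path `(S_1, …, S_m)` of cardinality `m` ending in `S`. -/
def PsiPathTo (m : ℕ) (S : ModuleCat.{0} A) : Prop :=
  1 ≤ m ∧ ∃ c : ℕ → ModuleCat.{0} A,
    (∀ i < m, IsSimpleModule A ↥(c i)) ∧
    (∀ i, i + 1 < m → IsPsiOf A (c i) (c (i + 1))) ∧
    Nonempty (c (m - 1) ≅ S)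

/-- `a(S)`: the supremum of the cardinalities of `ψ`-paths ending in `S`. -/
def aVal (S : ModuleCat.{0} A) : ℕ∞ :=
  sSup {d : ℕ∞ | ∃ m : ℕ, d = m ∧ PsiPathTo A m S}

/-- `a(A)`: the maximum of `a(S)` over the simple modules which are not `ψ`-cyclic. -/
def aAlg : ℕ∞ :=
  sSup {d : ℕ∞ | ∃ S : ModuleCat.{0} A, IsSimpleModule A ↥S ∧ aVal A S ≠ ⊤ ∧ aVal A S = d}

/-- `S` is a composition factor of `M`: a simple subquotient of `M`. -/
def IsCompFactorOf (S M : ModuleCat.{0} A) : Prop :=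
  IsSimpleModule A ↥S ∧ ∃ N' N : Submodule A ↥M, N' ≤ N ∧
    Nonempty ((↥N ⧸ N'.comap N.subtype) ≃ₗ[A] ↥S)

/-- `e(S) = min {pd S, pd (I S)} = x`. -/
def ERelVal (S : ModuleCat.{0} A) (x : ℕ∞) : Prop :=
  ∃ I, IsInjEnvOf A S I ∧ x = min (projDim A S) (projDim A I)

/-- `e*(S) = min {id S, id (P S)} = x`. -/
def EStarVal (S : ModuleCat.{0} A) (x : ℕ∞) : Prop :=
  ∃ P, IsProjCoverOf A S P ∧ x = min (injDim A S) (injDim A P)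

/-- `T = h(S) = top (Ω^{e(S)} N S)`, the homological permutation. -/
def HRel (S T : ModuleCat.{0} A) : Prop :=
  IsSimpleModule A ↥S ∧ IsSimpleModule A ↥T ∧
  ∃ z : ℕ, ERelVal A S z ∧
    ∃ N, ((Odd z ∧ N = S) ∨ (Even z ∧ IsInjEnvOf A S N)) ∧
      ∃ X, IsNthSyzygy A z N X ∧ IsSimpleTopOf A X T

/-- `S = h*(T) = soc (Σ^{e*(T)} N* T)`, the inverse homological permutation. -/
def HStarRel (T S : ModuleCat.{0} A) : Prop :=
  IsSimpleModule A ↥T ∧ IsSimpleModule A ↥S ∧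
  ∃ z : ℕ, EStarVal A T z ∧
    ∃ N, ((Odd z ∧ N = T) ∨ (Even z ∧ IsProjCoverOf A T N)) ∧
      ∃ X, IsNthCosyzygy A z N X ∧ IsSimpleSocOf A X S

/-- The `t`-fold relational iterate of a relation on modules (up to isomorphism). -/
def IterRel (r : ModuleCat.{0} A → ModuleCat.{0} A → Prop) :
    ℕ → ModuleCat.{0} A → ModuleCat.{0} A → Prop
  | 0, X, Y => Nonempty (X ≅ Y)
  | n + 1, X, Y => ∃ Z, r X Z ∧ IterRel r n Z Y

end ArtinAlg

namespace NakAux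

/-- The interlaced sequence `i, j, f i, f j, f (f i), …`. -/
def sq (f : ℤ → ℤ) : ℕ → ℤ → ℤ → ℤ
  | 0, i, _ => i
  | n + 1, i, j => sq f n j (f i)

theorem sq_zero (f : ℤ → ℤ) (i j : ℤ) : sq f 0 i j = i := rfl
theorem sq_succ (f : ℤ → ℤ) (n : ℕ) (i j : ℤ) : sq f (n + 1) i j = sq f n j (f i) := rfl

theorem sq_even (f : ℤ → ℤ) (k : ℕ) : ∀ i j : ℤ, sq f (2 * k) i j = f^[k] i := by
  induction k with
  | zero => intro i j; rfl
  | succ k ih =>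
    intro i j
    show sq f (2 * k) (f i) (f j) = _
    rw [ih, Function.iterate_succ_apply]

theorem sq_odd (f : ℤ → ℤ) (k : ℕ) (i j : ℤ) : sq f (2 * k + 1) i j = f^[k] j := by
  rw [sq_succ, sq_even]

section comb
variable (f : ℤ → ℤ) (n : ℕ)

theorem per_int (hper : ∀ t, f (t + n) = f t + n)
    (s t : ℤ) : f (t + s * n) = f t + s * n := by
  have h1 : ∀ (s : ℕ) (t : ℤ), f (t + s * n) = f t + s * n := by
    intro s
    induction s with
    | zero => intro t; simp
    | succ s ih =>
      intro t
      have : t + ((s + 1 : ℕ) : ℤ) * n = (t + s * n) + n := by push_cast; ring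
      rw [this, hper, ih]; push_cast; ring
  rcases s.eq_nat_or_neg with ⟨m, rfl | rfl⟩
  · exact h1 m t
  · have := h1 m (t + -(m : ℤ) * n)
    have h2 : t + -(m : ℤ) * n + m * n = t := by ring
    rw [h2] at this
    rw [this]; ring

theorem per_iter (hper : ∀ t, f (t + n) = f t + n)
    (k : ℕ) (s t : ℤ) : f^[k] (t + s * n) = f^[k] t + s * n := by
  induction k generalizing t with
  | zero => rfl
  | succ k ih => rw [Function.iterate_succ_apply, per_int f n hper, ih, Function.iterate_succ_apply]

theorem stab (hn : 0 < n) (hper : ∀ t, f (t + n) = f t + n) : ∃ a : ℕ, ∃ p : ℕ, 0 < p ∧ ∀ u : ℤ, ∃ s : ℤ, f^[a] u = f^[a + p] u + s * n := by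
  have : NeZero n := ⟨hn.ne'⟩
  obtain ⟨a, b, hab, h⟩ := Finite.exists_ne_map_eq_of_infinite
    (fun a : ℕ => fun u : Fin n => ((f^[a] (u : ℤ) : ℤ) : ZMod n))
  have key : ∀ a b : ℕ, a < b → (fun u : Fin n => ((f^[a] (u : ℤ) : ℤ) : ZMod n)) =
      (fun u : Fin n => ((f^[b] (u : ℤ) : ℤ) : ZMod n)) →
      ∃ a : ℕ, ∃ p : ℕ, 0 < p ∧ ∀ u : ℤ, ∃ s : ℤ, f^[a] u = f^[a + p] u + s * n := by
    intro a b hab h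
    refine ⟨a, b - a, by omega, fun u => ?_⟩
    have hb : a + (b - a) = b := by omega
    rw [hb]
    have hnz : (0 : ℤ) < n := by exact_mod_cast hn
    obtain ⟨r, hr⟩ : ∃ r : Fin n, (r : ℤ) = u % n :=
      ⟨⟨(u % n).toNat, by have := Int.emod_lt_of_pos u hnz; have := Int.emod_nonneg u hnz.ne'; omega⟩,
        by simpa using Int.emod_nonneg u hnz.ne'⟩
    have hu : u = (r : ℤ) + (u / n) * n := by rw [hr]; exact (Int.emod_add_ediv_mul u n).symm
    have h1 := congrFun h r
    beta_reduce at h1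
    rw [ZMod.intCast_eq_intCast_iff_dvd_sub] at h1
    obtain ⟨q, hq⟩ := h1
    refine ⟨-q, ?_⟩
    rw [hu, per_iter f n hper, per_iter f n hper]
    linear_combination -hq
  rcases lt_or_gt_of_ne hab with h' | h'
  · exact key a b h' h
  · exact key b a h' h.symm

theorem stab2 (hn : 0 < n) (hper : ∀ t, f (t + n) = f t + n)
    (k : ℕ) : ∃ N : ℕ, k ≤ N ∧ ∀ (b : ℕ) (u : ℤ), ∃ w : ℤ, f^[N] u = f^[b] w := by
  obtain ⟨a, p, hp, h⟩ := stab f n hn hper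
  have h1 : ∀ (t : ℕ) (u : ℤ), ∃ s : ℤ, f^[a] u = f^[a + p * t] u + s * n := by
    intro t
    induction t with
    | zero => intro u; exact ⟨0, by simp⟩
    | succ t ih =>
      intro u
      obtain ⟨s, hs⟩ := h u
      obtain ⟨s', hs'⟩ := ih (f^[p] u)
      refine ⟨s + s', ?_⟩
      have e1 : a + p * (t + 1) = (a + p * t) + p := by ring
      rw [e1, Function.iterate_add_apply f (a + p * t) p, hs, Function.iterate_add_apply, hs']
      ring
  have h2 : ∀ (b : ℕ) (u : ℤ), ∃ w : ℤ, f^[a] u = f^[b] w := by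
    intro b u
    obtain ⟨s, hs⟩ := h1 b u
    have : a + p * b = b + (a + p * b - b) := by
      have : b ≤ p * b := Nat.le_mul_of_pos_left b hp
      omega
    refine ⟨f^[a + p * b - b] (u + s * n), ?_⟩
    rw [hs, ← Function.iterate_add_apply, ← this, per_iter f n hper]
  refine ⟨a + k, by omega, fun b u => ?_⟩
  obtain ⟨w, hw⟩ := h2 b (f^[k] u)
  exact ⟨w, by rw [Function.iterate_add_apply, hw]⟩

theorem comb (hn : 0 < n) (hmono : Monotone f) (hper : ∀ t, f (t + n) = f t + n) (hlt : ∀ t, t < f t)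
    (x : ℤ) (k : ℕ) (hx : f^[k] (x + 1) = f^[k + 1] x) (y : ℤ) :
    ∃ m : ℕ, f^[m] y = f^[m] (y + 1) ∨ f^[m] (y + 1) = f^[m + 1] y := by
  obtain ⟨N, hkN, hN⟩ := stab2 f n hn hper k
  refine ⟨N, ?_⟩
  have hnz : (0 : ℤ) < n := by exact_mod_cast hn
  have hx' : ∀ b, k ≤ b → f^[b] (x + 1) = f^[b + 1] x := by
    intro b hb
    obtain ⟨d, rfl⟩ := Nat.exists_eq_add_of_le' hb
    rw [Function.iterate_add_apply, hx, ← Function.iterate_add_apply]; rfl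
  -- shift
  suffices H : ∀ y, x ≤ y → (f^[N] y = f^[N] (y + 1) ∨ f^[N] (y + 1) = f^[N + 1] y) by
    have h1 : x ≤ y + (|x - y|) * n := by
      have := le_abs_self (x - y); have h3 := abs_nonneg (x - y); nlinarith
    have := H _ h1
    rw [add_right_comm, per_iter f n hper, per_iter f n hper, per_iter f n hper] at this
    rcases this with h | h
    · left; linarith
    · right; linarith
  intro y hy
  have mi : ∀ b, Monotone (f^[b]) := fun b => hmono.iterate b
  have hex : ∃ t : ℕ, f^[N] y < f^[N + t] x := by
    have : ∀ t : ℕ, x + t ≤ f^[t] x := by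
      intro t
      induction t with
      | zero => simp
      | succ t ih =>
        rw [Function.iterate_succ_apply']
        have := hlt (f^[t] x); push_cast; linarith
    refine ⟨(f^[N] y - x).toNat + 1, ?_⟩
    have h3 := this (N + ((f^[N] y - x).toNat + 1))
    push_cast at h3
    have := Int.self_le_toNat (f^[N] y - x)
    linarith
  classical
  obtain ⟨t, ht, hmin⟩ : ∃ t : ℕ, f^[N] y < f^[N + t] x ∧ ∀ s < t, ¬ f^[N] y < f^[N + s] x :=
    ⟨Nat.find hex, Nat.find_spec hex, fun s hs => Nat.find_min hex hs⟩
  cases t with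
  | zero => exact absurd (mi N hy) (not_le.mpr ht)
  | succ t =>
  have hlow : f^[N + t] x ≤ f^[N] y := not_lt.mp (hmin t (Nat.lt_succ_self t))
  have split : ∀ w, f^[N + t] w ≤ f^[N + t] x ∨ f^[N + t + 1] x ≤ f^[N + t] w := by
    intro w
    rcases le_or_gt w x with h | h
    · left; exact mi _ h
    · right
      rw [← hx' (N + t) (by omega)]
      exact mi _ h
  have hu : f^[N] y = f^[N + t] x := by
    obtain ⟨w, hw⟩ := hN (N + t) y
    rcases split w with h | h
    · rw [← hw] at h; exact le_antisymm h hlow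
    · rw [← hw] at h
      exact absurd ht (not_lt.mpr h)
  have hv1 : f^[N] y ≤ f^[N] (y + 1) := mi N (by linarith)
  have hv2 : f^[N] (y + 1) ≤ f^[N + 1] y := by
    rw [Function.iterate_succ_apply]; exact mi N (hlt y)
  have e : f^[N + 1] y = f^[N + t + 1] x := by
    rw [Function.iterate_succ_apply', hu, Function.iterate_succ_apply']
  obtain ⟨w, hw⟩ := hN (N + t) (y + 1)
  rcases split w with h | h
  · rw [← hw] at h; left; exact le_antisymm hv1 (hu ▸ h)
  · rw [← hw] at h; right; exact le_antisymm hv2 (e ▸ h)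

/-- The combinatorial heart. -/
theorem comb_main (f : ℤ → ℤ) (k : ℕ) (a i j : ℤ) (hai : a ≤ i) (hij : i < j)
    (hj : f (a - 1) < j)
    (hmono : Monotone f) (hlt : ∀ t, t < f t)
    (hM1 : f^[k + 1] i = f^[k + 1] j)
    (hM2 : ∀ q < 2 * k + 1, sq f (q + 1) i j ≠ sq f (q + 2) i j)
    (hU : ∃ q ≤ 2 * k + 1, sq f (q + 1) a j = sq f (q + 2) a j)
    (hC : a < i → (∃ q, sq f (q + 1) a i = sq f (q + 2) a i) →
      ∃ q ≤ 2 * k + 1, sq f (q + 1) a i = sq f (q + 2) a i) :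
    f^[k + 1] (a - 1 + 1) = f^[k + 1 + 1] (a - 1) := by
  have mi : ∀ b, Monotone (f^[b]) := fun b => hmono.iterate b
  have fin : f^[k + 1] a = f^[k + 1] j → f^[k + 1] (a - 1 + 1) = f^[k + 1 + 1] (a - 1) := by
    intro h
    rw [Function.iterate_succ_apply f (k + 1)]
    apply le_antisymm
    · exact mi _ (hlt (a - 1))
    · rw [sub_add_cancel, h]; exact mi _ hj.le
  have up : ∀ (d e : ℕ) (u v : ℤ), d ≤ e → f^[d] u = f^[d] v → f^[e] u = f^[e] v := by
    intro d e u v hde h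
    obtain ⟨c, rfl⟩ := Nat.exists_eq_add_of_le' hde
    rw [Function.iterate_add_apply, h, ← Function.iterate_add_apply]
  obtain ⟨q, hq, hqe⟩ := hU
  rcases Nat.even_or_odd' q with ⟨c, rfl | rfl⟩
  · -- even
    have e2 : 2 * c + 2 = 2 * (c + 1) := by ring
    rw [sq_odd, e2, sq_even, Function.iterate_succ_apply] at hqe
    have h1 : f^[k] j = f^[k] (f a) := up c k _ _ (by omega) hqe
    have hai' : a < i := by
      rcases hai.lt_or_eq with h | h
      · exact h
      · exfalso
        subst h
        apply hM2 (2 * k) (by omega)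
        rw [sq_odd, show 2 * k + 2 = 2 * (k + 1) by ring, sq_even, Function.iterate_succ_apply, h1]
    obtain ⟨q, hq, hqe⟩ := hC hai' ⟨2 * (k + 1), by
      rw [sq_odd, show 2 * (k + 1) + 2 = 2 * (k + 1 + 1) by ring, sq_even, hM1,
        Function.iterate_succ_apply', h1, ← Function.iterate_succ_apply' f,
        ← Function.iterate_succ_apply f]⟩
    rcases Nat.even_or_odd' q with ⟨c, rfl | rfl⟩
    · exfalso
      have e2 : 2 * c + 2 = 2 * (c + 1) := by ring
      rw [sq_odd, e2, sq_even, Function.iterate_succ_apply] at hqe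
      have h2 : f^[k] i = f^[k] (f a) := up c k _ _ (by omega) hqe
      have h3 : f^[k] i = f^[k] j := h2.trans h1.symm
      rcases Nat.eq_zero_or_pos k with rfl | hk
      · exact hij.ne h3
      · apply hM2 (2 * (k - 1) + 1) (by omega)
        rw [show 2 * (k - 1) + 1 + 1 = 2 * k by omega, show 2 * (k - 1) + 1 + 2 = 2 * k + 1 by omega,
          sq_even, sq_odd, h3]
    · rw [show 2 * c + 1 + 1 = 2 * (c + 1) by ring, show 2 * c + 1 + 2 = 2 * (c + 1) + 1 by ring,
        sq_even, sq_odd] at hqe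
      exact fin ((up (c + 1) (k + 1) _ _ (by omega) hqe).trans hM1)
  · rw [show 2 * c + 1 + 1 = 2 * (c + 1) by ring, show 2 * c + 1 + 2 = 2 * (c + 1) + 1 by ring,
        sq_even, sq_odd] at hqe
    exact fin (up (c + 1) (k + 1) _ _ (by omega) hqe)

end comb

end NakAux

open CategoryTheory CategoryTheory.Limits

noncomputable section
namespace NakAux
open ArtinAlg

variable (A : Type) [Ring A]

/-- Unbundled projective dimension at most `n`. -/
def PD (n : ℕ) (M : Type) [AddCommGroup M] [Module A M] : Prop :=
  HasProjectiveDimensionLE (ModuleCat.of A M) n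

variable {A}
variable {M N K : Type} [AddCommGroup M] [Module A M] [AddCommGroup N] [Module A N]
  [AddCommGroup K] [Module A K]

theorem projective_cat_iff (M : ModuleCat.{0} A) : Projective M ↔ Module.Projective A M :=
  (IsProjective.iff_projective (M : Type)).symm

theorem PD_mono {n m : ℕ} (h : n ≤ m) (hM : PD A n M) : PD A m M := by
  unfold PD at *
  exact hasProjectiveDimensionLT_of_ge _ (n + 1) (m + 1) (by omega)

theorem PD_zero_iff : PD A 0 M ↔ Module.Projective A M := by
  unfold PD
  rw [← projective_iff_hasProjectiveDimensionLE_zero]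
  exact projective_cat_iff (ModuleCat.of A M)

theorem PD_equiv (e : M ≃ₗ[A] N) {n : ℕ} (h : PD A n M) : PD A n N := by
  unfold PD at *
  exact hasProjectiveDimensionLT_of_iso (X := ModuleCat.of A M) (X' := ModuleCat.of A N) e.toModuleIso (n+1)

theorem PD_retract (i : M →ₗ[A] N) (r : N →ₗ[A] M) (h : r ∘ₗ i = LinearMap.id) {n : ℕ}
    (hN : PD A n N) : PD A n M := by
  have R : Retract (ModuleCat.of A M) (ModuleCat.of A N) :=
    ⟨ModuleCat.ofHom i, ModuleCat.ofHom r, by rw [← ModuleCat.ofHom_comp, h]; rfl⟩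
  unfold PD at *
  exact R.hasProjectiveDimensionLT (n + 1)

/-- short exact sequence from a surjection -/
theorem ses (g : M →ₗ[A] N) (hg : Function.Surjective g) :
    ∃ w, (ShortComplex.mk (ModuleCat.ofHom (LinearMap.ker g).subtype) (ModuleCat.ofHom g) w).ShortExact := by
  refine ⟨by ext x; exact x.2, ?_⟩
  exact
    { exact := by
        rw [ShortComplex.moduleCat_exact_iff]
        intro x hx
        exact ⟨⟨x, hx⟩, rfl⟩
      mono_f := by
        rw [ModuleCat.mono_iff_injective]; exact Subtype.val_injective
      epi_g := by
        rw [ModuleCat.epi_iff_surjective]; exact hg }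

theorem PD_succ_iff (g : M →ₗ[A] N) (hg : Function.Surjective g) (hM : Module.Projective A M) (n : ℕ) :
    PD A (n + 1) N ↔ PD A n (LinearMap.ker g) := by
  obtain ⟨w, h⟩ := ses g hg
  exact h.hasProjectiveDimensionLT_X₃_iff n ((projective_cat_iff (ModuleCat.of A M)).2 hM)

theorem PD_ext (p : Submodule A M) {n : ℕ} (h1 : PD A n p) (h2 : PD A n (M ⧸ p)) : PD A n M := by
  obtain ⟨w, h⟩ := ses p.mkQ p.mkQ_surjective
  refine h.hasProjectiveDimensionLT_X₂ (n + 1) ?_ h2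
  exact PD_equiv (LinearEquiv.ofEq _ _ (Submodule.ker_mkQ p).symm) h1

theorem exists_proj_surj (M : Type) [AddCommGroup M] [Module A M] :
    ∃ (F : Type) (_ : AddCommGroup F) (_ : Module A F) (g : F →ₗ[A] M),
      Module.Projective A F ∧ Function.Surjective g :=
  ⟨M →₀ A, inferInstance, inferInstance, Finsupp.linearCombination A id, inferInstance,
    Finsupp.linearCombination_id_surjective A M⟩

theorem PD_iff_LE (n : ℕ) : ∀ (M : ModuleCat.{0} A), PD A n M ↔ ProjDimLE A n M := by
  induction n with
  | zero =>
    intro M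
    rw [PD_zero_iff, ← projective_cat_iff]
    constructor
    · exact fun h => ProjDimLE.zero M h
    · rintro ⟨h⟩; assumption
  | succ n ih =>
    intro M
    have tr : ∀ (P : ModuleCat.{0} A) (f : P ⟶ M), Projective P → Epi f →
        (PD A (n + 1) M ↔ PD A n ↥(kernel f)) := by
      intro P f hP hf
      rw [PD_succ_iff f.hom ((ModuleCat.epi_iff_surjective f).1 hf) ((projective_cat_iff P).1 hP)]
      have e := (ModuleCat.kernelIsoKer f).toLinearEquiv
      exact ⟨PD_equiv e.symm, PD_equiv e⟩
    constructor
    · intro h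
      obtain ⟨F, _, _, g, hF, hg⟩ := exists_proj_surj (A := A) M
      have hP : Projective (ModuleCat.of A F) := (projective_cat_iff _).2 hF
      have he : Epi (ModuleCat.ofHom g : ModuleCat.of A F ⟶ M) := (ModuleCat.epi_iff_surjective _).2 hg
      exact ProjDimLE.succ n M (ModuleCat.of A F) (ModuleCat.ofHom g) hP he
        ((ih _).1 ((tr _ _ hP he).1 h))
    · intro h
      cases h with
      | succ _ _ P f hP hf h => exact (tr P f hP hf).2 ((ih _).2 h)

theorem PD_of_subsingleton [Subsingleton M] (n : ℕ) : PD A n M :=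
  PD_mono (Nat.zero_le n) (PD_zero_iff.2 inferInstance)

theorem PD_dfinsupp (n : ℕ) : ∀ {ι : Type} (X : ι → Type) [∀ i, AddCommGroup (X i)]
    [∀ i, Module A (X i)], (∀ i, PD A n (X i)) → PD A n (Π₀ i, X i) := by
  induction n with
  | zero =>
    intro ι X _ _ h
    rw [PD_zero_iff]
    have : ∀ i, Module.Projective A (X i) := fun i => PD_zero_iff.1 (h i)
    infer_instance
  | succ n ih =>
    intro ι X _ _ h
    choose F i1 i2 g hF hg using fun i => exists_proj_surj (A := A) (X i)
    let G : (Π₀ i, F i) →ₗ[A] (Π₀ i, X i) := DFinsupp.mapRange.linearMap g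
    have hG : Function.Surjective G := by
      classical
      exact (DFinsupp.mapRange_surjective _ (fun i => (g i).map_zero)).2 hg
    rw [PD_succ_iff G hG inferInstance]
    have h2 := ih (fun i => LinearMap.ker (g i)) (fun i => (PD_succ_iff (g i) (hg i) (hF i) n).1 (h i))
    let I : (Π₀ i, LinearMap.ker (g i)) →ₗ[A] (Π₀ i, F i) :=
      DFinsupp.mapRange.linearMap (fun i => (LinearMap.ker (g i)).subtype)
    have hI : Function.Injective I := by
      classical
      exact (DFinsupp.mapRange_injective _ (fun i => rfl)).2 (fun i => Subtype.val_injective)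
    have hr : LinearMap.range I = LinearMap.ker G := by
      classical
      ext x
      constructor
      · rintro ⟨y, rfl⟩
        rw [LinearMap.mem_ker]
        ext i
        simp [G, I]
      · intro hx
        have hx' : ∀ i, g i (x i) = 0 := by
          intro i
          have := DFunLike.congr_fun (LinearMap.mem_ker.1 hx) i
          simpa [G] using this
        refine ⟨DFinsupp.mk x.support (fun i => ⟨x i, hx' i⟩), ?_⟩
        ext i
        simp only [I, DFinsupp.mapRange.linearMap_apply, DFinsupp.mapRange_apply, DFinsupp.mk_apply]
        split_ifs with hi
        · rfl
        · have h0 : x i = 0 := by simpa using hi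
          exact h0.symm
    exact PD_equiv ((LinearEquiv.ofInjective I hI).trans (LinearEquiv.ofEq _ _ hr)) h2

theorem PD_of_simple [IsArtinianRing A] (n : ℕ)
    (h : ∀ (S : Type) [AddCommGroup S] [Module A S], IsSimpleModule A S → PD A n S)
    (M : Type) [AddCommGroup M] [Module A M] : PD A n M := by
  refine IsSemiprimaryRing.induction A A M
    (P := fun M _ _ inst => PD A n M) ?_ ?_
  · intro M _ i1 i2 _ _ _
    obtain ⟨s, e, -, hs⟩ := IsSemisimpleModule.exists_linearEquiv_dfinsupp A M
    exact PD_equiv e.symm (PD_dfinsupp n _ (fun m => h _ (hs m)))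
  · intro M _ _ _ _ N h1 h2
    exact PD_ext N h1 h2

theorem projDim_le_iff (n : ℕ) (M : ModuleCat.{0} A) : projDim A M ≤ n ↔ PD A n M := by
  constructor
  · intro h
    have hne : {d : ℕ∞ | ∃ n : ℕ, d = n ∧ ProjDimLE A n M}.Nonempty := by
      by_contra hc
      rw [Set.not_nonempty_iff_eq_empty] at hc
      unfold projDim at h
      rw [hc, sInf_empty] at h
      simp at h
    obtain ⟨m, hm, hm'⟩ := csInf_mem hne
    unfold projDim at h
    rw [hm] at h
    exact PD_mono (by exact_mod_cast h) ((PD_iff_LE m M).2 hm')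
  · intro h
    exact sInf_le ⟨n, rfl, (PD_iff_LE n M).1 h⟩

theorem projDim_ne_top_iff (M : ModuleCat.{0} A) : projDim A M ≠ ⊤ ↔ ∃ n, PD A n M := by
  constructor
  · intro h
    obtain ⟨n, hn⟩ := ENat.ne_top_iff_exists.1 h
    exact ⟨n, (projDim_le_iff n M).1 hn.symm.le⟩
  · rintro ⟨n, hn⟩ h
    have := (projDim_le_iff n M).2 hn
    rw [h] at this
    simp at this

end NakAux
end

open CategoryTheory CategoryTheory.Limits

noncomputable section
set_option linter.unusedSectionVars false
namespace NakAux
open ArtinAlg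

section len
variable (A : Type) [Ring A]

/-- natural number length -/
def len (M : Type) [AddCommGroup M] [Module A M] : ℕ := (Module.length A M).toNat

/-- uniserial, unbundled -/
def Uni (M : Type) [AddCommGroup M] [Module A M] : Prop :=
  ∀ N₁ N₂ : Submodule A M, N₁ ≤ N₂ ∨ N₂ ≤ N₁

variable {A} [IsArtinianRing A]
variable {M N K : Type} [AddCommGroup M] [Module A M] [AddCommGroup N] [Module A N]
  [AddCommGroup K] [Module A K]

theorem length_coe (M : Type) [AddCommGroup M] [Module A M] [Module.Finite A M] :
    ((len A M : ℕ) : ℕ∞) = Module.length A M := by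
  unfold len
  exact ENat.natCast_toNat Module.length_ne_top

instance fin_sub [Module.Finite A M] (p : Submodule A M) : Module.Finite A p :=
  inferInstance

theorem len_surj [Module.Finite A M] (g : M →ₗ[A] N) (hg : Function.Surjective g) :
    len A M = len A (LinearMap.ker g) + len A N := by
  have : Module.Finite A N := Module.Finite.of_surjective g hg
  have h := Module.length_eq_add_of_exact (LinearMap.ker g).subtype g Subtype.val_injective hg
    (LinearMap.exact_subtype_ker_map g)
  rw [← length_coe, ← length_coe, ← length_coe] at h
  exact_mod_cast h

theorem len_equiv (e : M ≃ₗ[A] N) : len A M = len A N := by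
  unfold len; rw [e.length_eq]

theorem len_quot [Module.Finite A M] (p : Submodule A M) :
    len A M = len A p + len A (M ⧸ p) := by
  rw [len_surj p.mkQ p.mkQ_surjective,
    len_equiv (LinearEquiv.ofEq _ _ (Submodule.ker_mkQ p))]

theorem len_inj [Module.Finite A N] (i : M →ₗ[A] N) (hi : Function.Injective i) :
    len A M ≤ len A N := by
  rw [len_quot (LinearMap.range i), len_equiv (LinearEquiv.ofInjective i hi)]
  omega

theorem len_pos [Module.Finite A M] : 0 < len A M ↔ Nontrivial M := by
  rw [← Module.length_pos_iff (R := A), ← length_coe]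
  exact Nat.cast_pos.symm

theorem len_zero [Module.Finite A M] : len A M = 0 ↔ Subsingleton M := by
  rw [← Module.length_eq_zero_iff (R := A), ← length_coe]
  exact Nat.cast_eq_zero.symm

theorem len_one [Module.Finite A M] : len A M = 1 ↔ IsSimpleModule A M := by
  rw [← Module.length_eq_one_iff (R := A), ← length_coe]
  exact Nat.cast_eq_one.symm

theorem len_bot : len A (⊥ : Submodule A M) = 0 := by
  rw [len_zero]; infer_instance

theorem len_top : len A (⊤ : Submodule A M) = len A M := len_equiv Submodule.topEquiv

theorem len_mono [Module.Finite A M] {p q : Submodule A M} (h : p ≤ q) : len A p ≤ len A q :=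
  len_inj (Submodule.inclusion h) (Submodule.inclusion_injective h)

theorem eq_top_of_len [Module.Finite A M] {p : Submodule A M} (h : len A p = len A M) : p = ⊤ := by
  by_contra hp
  have := Submodule.length_lt (R := A) hp
  rw [← length_coe, ← length_coe, h] at this
  exact lt_irrefl _ this

theorem eq_of_len [Module.Finite A M] {p q : Submodule A M} (h : p ≤ q) (hl : len A p = len A q) :
    p = q := by
  have h1 : Submodule.comap q.subtype p = ⊤ := by
    apply eq_top_of_len
    rw [← hl]
    exact len_equiv (Submodule.comapSubtypeEquivOfLe h)
  rw [Submodule.comap_subtype_eq_top] at h1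
  exact le_antisymm h h1

theorem bij_of_inj_len [Module.Finite A M] [Module.Finite A N] (i : M →ₗ[A] N)
    (hi : Function.Injective i) (h : len A M = len A N) : Function.Bijective i := by
  refine ⟨hi, LinearMap.range_eq_top.1 (eq_top_of_len ?_)⟩
  rw [← h]; exact (len_equiv (LinearEquiv.ofInjective i hi)).symm

theorem bij_of_surj_len [Module.Finite A M] [Module.Finite A N] (i : M →ₗ[A] N)
    (hi : Function.Surjective i) (h : len A M = len A N) : Function.Bijective i := by
  refine ⟨LinearMap.ker_eq_bot.1 ?_, hi⟩
  have := len_surj i hi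
  have h0 : len A (LinearMap.ker i) = 0 := by omega
  rw [len_zero] at h0
  exact Submodule.eq_bot_of_subsingleton

theorem exists_maximal {A : Type} [Ring A] (M : Type) [AddCommGroup M] [Module A M]
    [Module.Finite A M] [Nontrivial M] : ∃ m : Submodule A M, IsCoatom m :=
  IsCoatomic.exists_coatom (Submodule A M)

theorem exists_sub (l : ℕ) : ∀ (M : Type) [AddCommGroup M] [Module A M] [Module.Finite A M],
    l ≤ len A M → ∃ p : Submodule A M, len A p = l := by
  have key : ∀ (d : ℕ) (M : Type) [AddCommGroup M] [Module A M] [Module.Finite A M],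
    len A M = l + d → ∃ p : Submodule A M, len A p = l := by
    intro d
    induction d with
    | zero => intro M _ _ _ h; exact ⟨⊤, by rw [len_top, h]; rfl⟩
    | succ d ih =>
      intro M _ _ _ h
      have : Nontrivial M := (len_pos (A := A)).1 (by omega)
      obtain ⟨m, hm⟩ := exists_maximal (A := A) M
      obtain ⟨p, hp⟩ := ih m (by
        have h1 := len_quot m
        have h2 : len A (M ⧸ m) = 1 := len_one.2 (isSimpleModule_iff_isCoatom.2 hm)
        omega)
      exact ⟨p.map m.subtype, by
        rw [← hp]; exact (len_equiv (Submodule.equivMapOfInjective _ Subtype.val_injective p)).symm⟩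
  intro M _ _ _ h
  exact key (len A M - l) M (by omega)

theorem uni_le [Module.Finite A M] (h : Uni A M) {p q : Submodule A M} (hl : len A p ≤ len A q) :
    p ≤ q := by
  rcases h p q with h | h
  · exact h
  · exact (eq_of_len h (le_antisymm (len_mono h) hl)).ge

theorem uni_eq [Module.Finite A M] (h : Uni A M) {p q : Submodule A M} (hl : len A p = len A q) :
    p = q := le_antisymm (uni_le h hl.le) (uni_le h hl.ge)

theorem uni_surj (h : Uni A M) (g : M →ₗ[A] N) (hg : Function.Surjective g) : Uni A N := by
  intro p q
  rcases h (p.comap g) (q.comap g) with h | h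
  · left; exact (Submodule.comap_le_comap_iff_of_surjective hg).1 h
  · right; exact (Submodule.comap_le_comap_iff_of_surjective hg).1 h

theorem uni_inj (h : Uni A N) (g : M →ₗ[A] N) (hg : Function.Injective g) : Uni A M := by
  intro p q
  rcases h (p.map g) (q.map g) with h | h
  · left; exact (Submodule.map_le_map_iff_of_injective hg p q).1 h
  · right; exact (Submodule.map_le_map_iff_of_injective hg q p).1 h

theorem uni_sub (h : Uni A M) (p : Submodule A M) : Uni A p := uni_inj h p.subtype Subtype.val_injective

/-- Induction on decompositions into indecomposables. -/
theorem decomp_induction {A : Type} [Ring A] [IsArtinianRing A]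
    (p : ∀ (M : Type) [AddCommGroup M] [Module A M], Prop)
    (h0 : ∀ (M : Type) [AddCommGroup M] [Module A M], Subsingleton M → p M)
    (h1 : ∀ (M : Type) [AddCommGroup M] [Module A M], Module.Finite A M →
      Indec A (ModuleCat.of A M) → p M)
    (h2 : ∀ (M : Type) [AddCommGroup M] [Module A M] (N₁ N₂ : Submodule A M), Module.Finite A M →
      IsCompl N₁ N₂ → p N₁ → p N₂ → p M)
    (M : Type) [AddCommGroup M] [Module A M] [Module.Finite A M] : p M := by
  have key : ∀ (d : ℕ) (M : Type) [AddCommGroup M] [Module A M] [Module.Finite A M],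
      len A M = d → p M := by
    intro d
    induction d using Nat.strong_induction_on with
    | _ d ih =>
      intro M _ _ hf hd
      by_cases hs : Subsingleton M
      · exact h0 M hs
      have hnt : Nontrivial M := not_subsingleton_iff_nontrivial.1 hs
      by_cases hi : Indec A (ModuleCat.of A M)
      · exact h1 M hf hi
      have : ∃ N₁ N₂ : Submodule A M, IsCompl N₁ N₂ ∧ N₁ ≠ ⊥ ∧ N₂ ≠ ⊥ := by
        by_contra hc
        apply hi
        refine ⟨hnt, fun N₁ N₂ h => ?_⟩
        by_contra hcc
        rw [not_or] at hcc
        exact hc ⟨N₁, N₂, h, hcc.1, hcc.2⟩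
      obtain ⟨N₁, N₂, hc, hn1, hn2⟩ := this
      have small : ∀ N₁ N₂ : Submodule A M, IsCompl N₁ N₂ → N₂ ≠ ⊥ → len A N₁ < d := by
        intro N₁ N₂ hc h
        have h3 := len_mono (le_top : N₁ ≤ ⊤)
        rw [len_top, hd] at h3
        refine lt_of_le_of_ne h3 (fun he => h ?_)
        have : N₁ = ⊤ := eq_top_of_len (by rw [he, hd])
        subst this
        exact top_inf_eq N₂ ▸ hc.disjoint.eq_bot
      exact h2 M N₁ N₂ hf hc (ih _ (small N₁ N₂ hc hn2) N₁ rfl) (ih _ (small N₂ N₁ hc.symm hn1) N₂ rfl)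
  exact key _ M rfl

end len
end NakAux
end

open CategoryTheory CategoryTheory.Limits

noncomputable section
set_option linter.unusedSectionVars false
namespace NakAux
open ArtinAlg

/-- The simple modules, with uniserial projective covers. -/
structure Ctx (A : Type) [Ring A] where
  ι : Type
  fin : Fintype ι
  S : ι → ModuleCat.{0} A
  P : ι → ModuleCat.{0} A
  hS : ∀ i, IsSimpleModule A (S i)
  hSex : ∀ (T : Type) [AddCommGroup T] [Module A T], IsSimpleModule A T →
    ∃ i, Nonempty (T ≃ₗ[A] S i)
  hSu : ∀ i j, Nonempty (S i ≃ₗ[A] S j) → i = j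
  hPfin : ∀ i, Module.Finite A (P i)
  hPuni : ∀ i, Uni A (P i)
  hPproj : ∀ i, Module.Projective A (P i)
  π : ∀ i, P i →ₗ[A] S i
  hπ : ∀ i, Function.Surjective (π i)

variable {A : Type} [Ring A] [IsArtinianRing A]

theorem indec_uni (hNak : IsNakayama A) (M : Type) [AddCommGroup M] [Module A M]
    (hf : Module.Finite A M) (h : Indec A (ModuleCat.of A M)) : Uni A M :=
  hNak (ModuleCat.of A M) hf h

namespace Ctx
variable (C : Ctx A)

instance (i : C.ι) : Module.Finite A (C.P i) := C.hPfin i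
instance (i : C.ι) : IsSimpleModule A (C.S i) := C.hS i
instance (i : C.ι) : Module.Projective A (C.P i) := C.hPproj i
instance : Fintype C.ι := C.fin

theorem nontrivP (i : C.ι) : Nontrivial (C.P i) := by
  have : Nontrivial (C.S i) := IsSimpleModule.nontrivial A _
  exact (C.hπ i).nontrivial

variable {M N : Type} [AddCommGroup M] [Module A M] [AddCommGroup N] [Module A N]

theorem len_S (i : C.ι) : len A (C.S i) = 1 := len_one.2 (C.hS i)

theorem top_exists [Module.Finite A M] [Nontrivial M] :
    ∃ (i : C.ι) (g : M →ₗ[A] C.S i), Function.Surjective g := by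
  obtain ⟨m, hm⟩ := exists_maximal (A := A) M
  obtain ⟨i, ⟨e⟩⟩ := C.hSex (M ⧸ m) (isSimpleModule_iff_isCoatom.2 hm)
  exact ⟨i, e.toLinearMap ∘ₗ m.mkQ, e.surjective.comp m.mkQ_surjective⟩

theorem top_unique [Module.Finite A M] (hu : Uni A M) {i j : C.ι} (g : M →ₗ[A] C.S i)
    (hg : Function.Surjective g) (g' : M →ₗ[A] C.S j) (hg' : Function.Surjective g') : i = j := by
  have h1 := len_surj g hg
  have h2 := len_surj g' hg'
  rw [C.len_S] at h1 h2
  have h3 : LinearMap.ker g = LinearMap.ker g' := uni_eq hu (by omega)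
  exact C.hSu i j ⟨(g.quotKerEquivOfSurjective hg).symm.trans
    ((Submodule.quotEquivOfEq _ _ h3).trans (g'.quotKerEquivOfSurjective hg'))⟩

theorem cover [Module.Finite A M] (hu : Uni A M) {i : C.ι} (g : M →ₗ[A] C.S i)
    (hg : Function.Surjective g) : ∃ h : C.P i →ₗ[A] M, Function.Surjective h := by
  obtain ⟨h, hh⟩ := Module.projective_lifting_property g (C.π i) hg
  refine ⟨h, LinearMap.range_eq_top.1 ?_⟩
  have hc : IsCoatom (LinearMap.ker g) := by
    rw [← isSimpleModule_iff_isCoatom]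
    exact IsSimpleModule.congr (g.quotKerEquivOfSurjective hg)
  have hn : ¬ LinearMap.range h ≤ LinearMap.ker g := by
    intro hle
    have : Nontrivial (C.S i) := IsSimpleModule.nontrivial A _
    obtain ⟨y, hy⟩ := exists_ne (0 : C.S i)
    obtain ⟨x, rfl⟩ := C.hπ i y
    apply hy
    rw [← hh]
    exact LinearMap.mem_ker.1 (hle ⟨x, rfl⟩)
  rcases hu (LinearMap.range h) (LinearMap.ker g) with h1 | h1
  · exact absurd h1 hn
  · exact hc.2 _ (lt_of_le_of_ne h1 (fun e => hn e.ge))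

/-- `M` is a quotient of `P i` of length `l`. -/
def B (i : C.ι) (l : ℕ) (M : Type) [AddCommGroup M] [Module A M] : Prop :=
  (∃ h : C.P i →ₗ[A] M, Function.Surjective h) ∧ len A M = l

variable {C}

theorem B.finite {i : C.ι} {l : ℕ} (h : C.B i l M) : Module.Finite A M := by
  obtain ⟨⟨g, hg⟩, -⟩ := h
  exact Module.Finite.of_surjective g hg

theorem B.uni {i : C.ι} {l : ℕ} (h : C.B i l M) : Uni A M := by
  obtain ⟨⟨g, hg⟩, -⟩ := h
  exact uni_surj (C.hPuni i) g hg

theorem B.equiv {i : C.ι} {l : ℕ} (h : C.B i l M) (e : M ≃ₗ[A] N) : C.B i l N := by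
  obtain ⟨⟨g, hg⟩, hl⟩ := h
  exact ⟨⟨e.toLinearMap ∘ₗ g, e.surjective.comp hg⟩, by rw [← len_equiv e, hl]⟩

theorem B.iso {i : C.ι} {l : ℕ} (h : C.B i l M) (h' : C.B i l N) : Nonempty (M ≃ₗ[A] N) := by
  obtain ⟨⟨g, hg⟩, hl⟩ := h
  obtain ⟨⟨g', hg'⟩, hl'⟩ := h'
  have h1 := len_surj g hg
  have h2 := len_surj g' hg'
  have h3 : LinearMap.ker g = LinearMap.ker g' := uni_eq (C.hPuni i) (by omega)
  exact ⟨(g.quotKerEquivOfSurjective hg).symm.trans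
    ((Submodule.quotEquivOfEq _ _ h3).trans (g'.quotKerEquivOfSurjective hg'))⟩

theorem B.le {i : C.ι} {l : ℕ} (h : C.B i l M) : l ≤ len A (C.P i) := by
  obtain ⟨⟨g, hg⟩, hl⟩ := h
  have h1 := len_surj g hg
  omega

theorem B.top {i j : C.ι} {l : ℕ} (h : C.B i l M) (g : M →ₗ[A] C.S j)
    (hg : Function.Surjective g) : i = j := by
  obtain ⟨⟨g', hg'⟩, hl⟩ := h
  exact C.top_unique (C.hPuni i) (C.π i) (C.hπ i) (g ∘ₗ g') (hg.comp hg')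

theorem B_S (i : C.ι) : C.B i 1 (C.S i) := ⟨⟨C.π i, C.hπ i⟩, C.len_S i⟩

theorem B_P (i : C.ι) : C.B i (len A (C.P i)) (C.P i) :=
  ⟨⟨LinearMap.id, Function.surjective_id⟩, rfl⟩

theorem B_of_uni [Module.Finite A M] [Nontrivial M] (hu : Uni A M) :
    ∃ i, C.B i (len A M) M := by
  obtain ⟨i, g, hg⟩ := C.top_exists (M := M)
  exact ⟨i, C.cover hu g hg, rfl⟩

theorem B_exists (i : C.ι) (l : ℕ) (hl : l ≤ len A (C.P i)) :
    ∃ p : Submodule A (C.P i), C.B i l (C.P i ⧸ p) := by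
  obtain ⟨p, hp⟩ := exists_sub (A := A) (len A (C.P i) - l) (C.P i) (by omega)
  have := len_quot p
  exact ⟨p, ⟨p.mkQ, p.mkQ_surjective⟩, by omega⟩

variable (C)

/-- The arrows of the quiver. -/
def Arrow (i j : C.ι) : Prop :=
  ∃ g : LinearMap.ker (C.π i) →ₗ[A] C.S j, Function.Surjective g

variable {C}

theorem len_ker (i : C.ι) : len A (C.P i) = len A (LinearMap.ker (C.π i)) + 1 := by
  rw [len_surj (C.π i) (C.hπ i), C.len_S]

theorem Arrow.funct {i j k : C.ι} (h : C.Arrow i j) (h' : C.Arrow i k) : j = k := by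
  obtain ⟨g, hg⟩ := h
  obtain ⟨g', hg'⟩ := h'
  exact C.top_unique (uni_sub (C.hPuni i) _) g hg g' hg'

theorem Arrow.two_le {i j : C.ι} (h : C.Arrow i j) : 2 ≤ len A (C.P i) := by
  obtain ⟨g, hg⟩ := h
  have h1 := len_surj g hg
  rw [C.len_S] at h1
  have := len_ker i
  omega

theorem B.step {i : C.ι} {l : ℕ} (h : C.B i (l + 1) M) (p : Submodule A M) (hp : len A p = l)
    (hl : 0 < l) : ∃ j, C.Arrow i j ∧ C.B j l p := by
  have hf := h.finite
  have hu := h.uni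
  obtain ⟨⟨g, hg⟩, hlen⟩ := h
  have hpn : Nontrivial p := (len_pos (A := A)).1 (by omega)
  obtain ⟨j, t, ht⟩ := C.top_exists (M := p)
  have hk : LinearMap.ker (C.π i) = p.comap g := by
    apply uni_eq (C.hPuni i)
    have h1 := len_ker i
    have h2 := len_surj (p.mkQ ∘ₗ g) (p.mkQ_surjective.comp hg)
    have h3 := len_quot p
    rw [LinearMap.ker_comp, Submodule.ker_mkQ] at h2
    omega
  refine ⟨j, ?_, C.cover (uni_sub hu p) t ht, hp⟩
  let r : LinearMap.ker (C.π i) →ₗ[A] p :=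
    (g ∘ₗ (LinearMap.ker (C.π i)).subtype).codRestrict p (fun x => by
      have : (x : C.P i) ∈ p.comap g := hk ▸ x.2
      exact this)
  have hr : Function.Surjective r := by
    rintro ⟨y, hy⟩
    obtain ⟨x, rfl⟩ := hg y
    have hx : x ∈ LinearMap.ker (C.π i) := by rw [hk]; exact hy
    exact ⟨⟨x, hx⟩, rfl⟩
  exact ⟨t ∘ₗ r, ht.comp hr⟩

/-- a permutation extending the quiver -/
def Ext (σ : Equiv.Perm C.ι) : Prop := ∀ i j, C.Arrow i j → σ i = j

theorem B.chain {σ : Equiv.Perm C.ι} (hσ : Ext σ) {i : C.ι} (s : ℕ) : ∀ {l : ℕ}, 0 < l →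
    C.B i (l + s) M → ∀ p : Submodule A M, len A p = l → C.B ((σ ^ s) i) l p := by
  induction s with
  | zero =>
    intro l hl h p hp
    have hf := h.finite
    have : p = ⊤ := eq_top_of_len (by rw [hp, h.2]; rfl)
    subst this
    exact h.equiv Submodule.topEquiv.symm
  | succ s ih =>
    intro l hl h p hp
    have hf := h.finite
    have hlen : len A M = l + (s + 1) := h.2
    obtain ⟨q, hq⟩ := exists_sub (A := A) (l + 1) M (by omega)
    have h' : C.B i (l + 1 + s) M := by
      have e : l + 1 + s = l + (s + 1) := by ring
      rw [e]; exact h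
    have hB := ih (by omega) h' q hq
    have hpq : p ≤ q := uni_le h.uni (by omega)
    have e := Submodule.comapSubtypeEquivOfLe hpq
    obtain ⟨j, hj, hj'⟩ := hB.step (p.comap q.subtype) (by rw [len_equiv e, hp]) hl
    have := hσ _ _ hj
    rw [pow_succ', Equiv.Perm.mul_apply, this]
    exact hj'.equiv e

end Ctx
end NakAux
end

open CategoryTheory CategoryTheory.Limits

noncomputable section
set_option linter.unusedSectionVars false
namespace NakAux
open ArtinAlg

variable {A : Type} [Ring A] [IsArtinianRing A]
variable {Q : Type} [AddCommGroup Q] [Module A Q]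

theorem env_zorn (t0 : Q) (h0 : t0 ≠ 0) :
    ∃ K : Submodule A Q, t0 ∉ K ∧ ∀ N : Submodule A Q, K < N → t0 ∈ N := by
  obtain ⟨K, -, hK⟩ := zorn_le_nonempty₀ {K : Submodule A Q | t0 ∉ K} (by
    intro c hc hch y hy
    refine ⟨sSup c, ?_, fun z hz => le_sSup hz⟩
    intro hmem
    obtain ⟨z, hz, hz'⟩ := (Submodule.mem_sSup_of_directed ⟨y, hy⟩ hch.directedOn).1 hmem
    exact hc hz hz') ⊥ (by simpa using h0)
  refine ⟨K, hK.1, fun N hN => ?_⟩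
  by_contra h
  exact hN.not_ge (hK.2 h hN.le)

theorem envelope (hNak : IsNakayama A) (hQ : Module.Injective A Q)
    {T : Type} [AddCommGroup T] [Module A T] [IsSimpleModule A T]
    (s : T →ₗ[A] Q) (hs : Function.Injective s) :
    ∃ K : Submodule A Q, (∀ V : Submodule A (Q ⧸ K), V.FG → Uni A V) ∧
      ∀ (M : Type) [AddCommGroup M] [Module A M], Uni A M →
        ∀ j : T →ₗ[A] M, Function.Injective j →
          ∃ F : M →ₗ[A] Q, Function.Injective (K.mkQ ∘ₗ F) := by
  have : Nontrivial T := IsSimpleModule.nontrivial A T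
  obtain ⟨t, ht⟩ := exists_ne (0 : T)
  have ht0 : s t ≠ 0 := fun h => ht (hs (by rw [h, map_zero]))
  obtain ⟨K, hK, hK'⟩ := env_zorn (A := A) (s t) ht0
  have key : ∀ W : Submodule A (Q ⧸ K), W ≠ ⊥ → K.mkQ (s t) ∈ W := by
    intro W hW
    have : K < W.comap K.mkQ := by
      refine lt_of_le_of_ne (Submodule.le_comap_mkQ K W) ?_
      intro h
      apply hW
      rw [← Submodule.map_comap_eq_of_surjective K.mkQ_surjective W, ← h]
      exact Submodule.mkQ_map_self K
    exact hK' _ this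
  have hne : K.mkQ (s t) ≠ 0 := by
    rw [Submodule.mkQ_apply, Ne, Submodule.Quotient.mk_eq_zero]; exact hK
  refine ⟨K, ?_, ?_⟩
  · intro V hV
    by_cases hV0 : V = ⊥
    · subst hV0
      intro p q
      left
      intro x _
      have : x = 0 := Subsingleton.elim _ _
      rw [this]; exact q.zero_mem
    have hVf : Module.Finite A V := Module.Finite.iff_fg.2 hV
    refine indec_uni hNak V hVf ⟨?_, ?_⟩
    · exact (Submodule.nontrivial_iff_ne_bot).2 hV0
    · intro N₁ N₂ hc
      by_contra! hcon
      obtain ⟨h1, h2⟩ := hcon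
      have aux : ∀ N : Submodule A V, N ≠ ⊥ → K.mkQ (s t) ∈ N.map V.subtype := by
        intro N hN
        apply key
        intro h
        apply hN
        exact Submodule.map_injective_of_injective (f := V.subtype) Subtype.val_injective
          (by rw [h, Submodule.map_bot])
      obtain ⟨x, hx, hx'⟩ := aux N₁ h1
      obtain ⟨y, hy, hy'⟩ := aux N₂ h2
      have hxy : x = y := Subtype.val_injective (hx'.trans hy'.symm)
      subst hxy
      have : x ∈ N₁ ⊓ N₂ := ⟨hx, hy⟩
      rw [hc.inf_eq_bot] at this
      rw [Submodule.mem_bot] at this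
      subst this
      exact hne hx'.symm
  · intro M _ _ hu j hj
    obtain ⟨F, hF⟩ := hQ.out j hj s
    refine ⟨F, ?_⟩
    rw [← LinearMap.ker_eq_bot]
    rcases hu (LinearMap.ker (K.mkQ ∘ₗ F)) (LinearMap.range j) with h | h
    · by_contra hk
      have hk2 : (LinearMap.ker (K.mkQ ∘ₗ F)).comap j ≠ ⊥ := by
        intro h3
        apply hk
        rw [eq_bot_iff]
        intro x hx
        obtain ⟨y, rfl⟩ := h hx
        have : y ∈ (LinearMap.ker (K.mkQ ∘ₗ F)).comap j := hx
        rw [h3, Submodule.mem_bot] at this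
        simp [this]
      have h4 := (eq_bot_or_eq_top ((LinearMap.ker (K.mkQ ∘ₗ F)).comap j)).resolve_left hk2
      have h5 : t ∈ (LinearMap.ker (K.mkQ ∘ₗ F)).comap j := by rw [h4]; trivial
      apply absurd _ hne
      have h6 : K.mkQ (F (j t)) = 0 := h5
      rw [hF] at h6
      exact h6
    · have h5 : j t ∈ LinearMap.ker (K.mkQ ∘ₗ F) := h ⟨t, rfl⟩
      apply absurd _ hne
      have h6 : K.mkQ (F (j t)) = 0 := h5
      rw [hF] at h6
      exact h6

theorem same_soc (hNak : IsNakayama A) (hQ : Module.Injective A Q)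
    {T : Type} [AddCommGroup T] [Module A T] [IsSimpleModule A T]
    (s : T →ₗ[A] Q) (hs : Function.Injective s)
    {X Y : Type} [AddCommGroup X] [Module A X] [AddCommGroup Y] [Module A Y]
    [Module.Finite A X] [Module.Finite A Y] (hX : Uni A X) (hY : Uni A Y)
    (i : T →ₗ[A] X) (hi : Function.Injective i) (j : T →ₗ[A] Y) (hj : Function.Injective j)
    (hl : len A X = len A Y) : Nonempty (X ≃ₗ[A] Y) := by
  obtain ⟨K, h1, h2⟩ := envelope hNak hQ s hs
  obtain ⟨F, hF⟩ := h2 X hX i hi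
  obtain ⟨G, hG⟩ := h2 Y hY j hj
  set f := K.mkQ ∘ₗ F
  set g := K.mkQ ∘ₗ G
  let V := LinearMap.range f ⊔ LinearMap.range g
  have hVfg : V.FG := Submodule.FG.sup (Submodule.FG.of_finite) (Submodule.FG.of_finite)
  have hV := h1 V hVfg
  have hVf : Module.Finite A V := Module.Finite.iff_fg.2 hVfg
  let f' : X →ₗ[A] V := f.codRestrict V (fun x => Submodule.mem_sup_left ⟨x, rfl⟩)
  let g' : Y →ₗ[A] V := g.codRestrict V (fun x => Submodule.mem_sup_right ⟨x, rfl⟩)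
  have hf' : Function.Injective f' := fun x y h => hF (congrArg Subtype.val h)
  have hg' : Function.Injective g' := fun x y h => hG (congrArg Subtype.val h)
  let ef := LinearEquiv.ofInjective f' hf'
  let eg := LinearEquiv.ofInjective g' hg'
  have : LinearMap.range f' = LinearMap.range g' :=
    uni_eq hV ((len_equiv ef).symm.trans (hl.trans (len_equiv eg)))
  exact ⟨ef.trans ((LinearEquiv.ofEq _ _ this).trans eg.symm)⟩

theorem max_summand (hNak : IsNakayama A) (hQ : Module.Injective A Q)
    (hcog : ∀ (T : Type) [AddCommGroup T] [Module A T], IsSimpleModule A T →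
      ∃ s : T →ₗ[A] Q, Function.Injective s)
    {U : Type} [AddCommGroup U] [Module A U] [Module.Finite A U] [Nontrivial U] (hU : Uni A U)
    (hmax : ∀ (V : Type) [AddCommGroup V] [Module A V], Module.Finite A V → Uni A V →
      (∃ j : U →ₗ[A] V, Function.Injective j) → len A V ≤ len A U) :
    ∃ (i : U →ₗ[A] Q) (r : Q →ₗ[A] U), r ∘ₗ i = LinearMap.id := by
  obtain ⟨p, hp⟩ := exists_sub (A := A) 1 U (len_pos.2 inferInstance)
  have hps : IsSimpleModule A p := len_one.1 hp
  obtain ⟨s, hs⟩ := hcog p hps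
  obtain ⟨K, h1, h2⟩ := envelope hNak hQ s hs
  obtain ⟨F, hF⟩ := h2 U hU p.subtype Subtype.val_injective
  have hsurj : Function.Surjective (K.mkQ ∘ₗ F) := by
    intro e
    let V := LinearMap.range (K.mkQ ∘ₗ F) ⊔ Submodule.span A {e}
    have hVfg : V.FG := Submodule.FG.sup (Submodule.FG.of_finite) (Submodule.fg_span_singleton e)
    have hV := h1 V hVfg
    have hVf : Module.Finite A V := Module.Finite.iff_fg.2 hVfg
    let f' : U →ₗ[A] V := (K.mkQ ∘ₗ F).codRestrict V (fun x => Submodule.mem_sup_left ⟨x, rfl⟩)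
    have hf' : Function.Injective f' := fun x y h => hF (congrArg Subtype.val h)
    have h3 := hmax V hVf hV ⟨f', hf'⟩
    have h4 := bij_of_inj_len f' hf' (le_antisymm (len_inj f' hf') h3)
    obtain ⟨x, hx⟩ := h4.2 ⟨e, Submodule.mem_sup_right (Submodule.mem_span_singleton_self e)⟩
    exact ⟨x, congrArg Subtype.val hx⟩
  let E := LinearEquiv.ofBijective (K.mkQ ∘ₗ F) ⟨hF, hsurj⟩
  refine ⟨F, E.symm.toLinearMap ∘ₗ K.mkQ, ?_⟩
  ext x
  exact E.symm_apply_apply x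

namespace Ctx
variable {C : Ctx A}

theorem Arrow.two {i j : C.ι} (h : C.Arrow i j) :
    ∃ p : Submodule A (C.P i), C.B i 2 (C.P i ⧸ p) ∧
      ∃ f : C.S j →ₗ[A] (C.P i ⧸ p), Function.Injective f := by
  obtain ⟨p, hp⟩ := B_exists i 2 h.two_le
  have hf := hp.finite
  obtain ⟨q, hq⟩ := exists_sub (A := A) 1 (C.P i ⧸ p) (by rw [hp.2]; omega)
  obtain ⟨k, hk, hB⟩ := B.step (l := 1) hp q hq one_pos
  obtain rfl := h.funct hk
  obtain ⟨e⟩ := (B_S j).iso hB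
  exact ⟨p, hp, q.subtype ∘ₗ e.toLinearMap, Subtype.val_injective.comp e.injective⟩

theorem arrow_inj (hNak : IsNakayama A) (hQ : Module.Injective A Q)
    (hcog : ∀ (T : Type) [AddCommGroup T] [Module A T], IsSimpleModule A T →
      ∃ s : T →ₗ[A] Q, Function.Injective s) {i i' j : C.ι} (h : C.Arrow i j)
    (h' : C.Arrow i' j) : i = i' := by
  obtain ⟨p, hp, f, hf⟩ := h.two
  obtain ⟨p', hp', f', hf'⟩ := h'.two
  obtain ⟨s, hs⟩ := hcog (C.S j) (C.hS j)
  have h1 := hp.finite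
  have h2 := hp'.finite
  obtain ⟨e⟩ := same_soc hNak hQ s hs hp.uni hp'.uni f hf f' hf' (by rw [hp.2, hp'.2])
  have hn : Nontrivial (C.P i ⧸ p) := len_pos.1 (by rw [hp.2]; omega)
  obtain ⟨k, g, hg⟩ := C.top_exists (M := C.P i ⧸ p)
  rw [hp.top g hg, (hp'.equiv e.symm).top g hg]

theorem exists_ext (hNak : IsNakayama A) (hQ : Module.Injective A Q)
    (hcog : ∀ (T : Type) [AddCommGroup T] [Module A T], IsSimpleModule A T →
      ∃ s : T →ₗ[A] Q, Function.Injective s) : ∃ σ : Equiv.Perm C.ι, Ext σ := by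
  classical
  let p : C.ι → Prop := fun i => ∃ j, C.Arrow i j
  let q : C.ι → Prop := fun j => ∃ i, C.Arrow i j
  let e : {x // p x} ≃ {x // q x} := Equiv.ofBijective
    (fun x => ⟨x.2.choose, ⟨x.1, x.2.choose_spec⟩⟩) (by
      constructor
      · rintro ⟨x, hx⟩ ⟨y, hy⟩ h
        have h' : hx.choose = hy.choose := congrArg Subtype.val h
        have h1 := hx.choose_spec
        rw [h'] at h1
        exact Subtype.ext (arrow_inj hNak hQ hcog h1 hy.choose_spec)
      · rintro ⟨j, i, hij⟩
        refine ⟨⟨i, j, hij⟩, Subtype.ext ?_⟩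
        exact (Exists.choose_spec (⟨j, hij⟩ : p i)).funct hij)
  refine ⟨e.extendSubtype, fun i j hij => ?_⟩
  have hp : p i := ⟨j, hij⟩
  rw [Equiv.extendSubtype_apply_of_mem e i hp]
  exact hp.choose_spec.funct hij

end Ctx
end NakAux
end

open CategoryTheory CategoryTheory.Limits

noncomputable section
set_option linter.unusedSectionVars false
namespace NakAux
open ArtinAlg

variable {A : Type} [Ring A] [IsArtinianRing A]

namespace Ctx
variable {C : Ctx A}
variable {M N : Type} [AddCommGroup M] [Module A M] [AddCommGroup N] [Module A N]

theorem B_unique {i j : C.ι} {l l' : ℕ} (h : C.B i l M) (h' : C.B j l' M) (hl : 0 < l) :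
    i = j := by
  have hf := h.finite
  have hn : Nontrivial M := len_pos.1 (by rw [h.2]; omega)
  obtain ⟨k, g, hg⟩ := C.top_exists (M := M)
  rw [h.top g hg, h'.top g hg]

theorem hom_orbit {σ : Equiv.Perm C.ι} (hσ : Ext σ) {i j : C.ι} (h : C.P i →ₗ[A] C.P j)
    (h0 : h ≠ 0) : ∃ s : ℕ, (σ ^ s) j = i := by
  have hn : LinearMap.range h ≠ ⊥ := fun e => h0 (LinearMap.range_eq_bot.1 e)
  have hn' : Nontrivial (LinearMap.range h) := Submodule.nontrivial_iff_ne_bot.2 hn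
  have hB : C.B i (len A (LinearMap.range h)) (LinearMap.range h) :=
    ⟨⟨h.rangeRestrict, h.surjective_rangeRestrict⟩, rfl⟩
  have hpos : 0 < len A (LinearMap.range h) := len_pos.2 hn'
  have hle : len A (LinearMap.range h) ≤ len A (C.P j) :=
    len_inj (LinearMap.range h).subtype Subtype.val_injective
  obtain ⟨s, hs⟩ := Nat.exists_eq_add_of_le hle
  have hP := B_P (C := C) j
  rw [hs] at hP
  have := B.chain hσ s hpos hP (LinearMap.range h) rfl
  exact ⟨s, B_unique this hB hpos⟩

variable (C) in
/-- only composition factors in `O` -/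
def TypeO (O : Set C.ι) (N : Type) [AddCommGroup N] [Module A N] : Prop :=
  ∀ i, i ∉ O → ∀ h : C.P i →ₗ[A] N, h = 0

theorem TypeO.inj {O : Set C.ι} (h : C.TypeO O N) (f : M →ₗ[A] N) (hf : Function.Injective f) :
    C.TypeO O M := by
  intro i hi g
  have := h i hi (f ∘ₗ g)
  ext x
  apply hf
  rw [LinearMap.zero_apply, map_zero]
  exact LinearMap.congr_fun this x

theorem TypeO.prod {O : Set C.ι} (h : C.TypeO O N) (h' : C.TypeO O M) : C.TypeO O (N × M) := by
  intro i hi g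
  have h1 := h i hi (LinearMap.fst A N M ∘ₗ g)
  have h2 := h' i hi (LinearMap.snd A N M ∘ₗ g)
  apply LinearMap.ext
  intro x
  exact Prod.ext (LinearMap.congr_fun h1 x) (LinearMap.congr_fun h2 x)

theorem TypeO_sub {O : Set C.ι} (h : Subsingleton N) : C.TypeO O N := by
  intro i hi g
  ext x
  exact Subsingleton.elim _ _

theorem TypeO_B {σ : Equiv.Perm C.ι} (hσ : Ext σ) {O : Set C.ι}
    (hO : ∀ (s : ℕ) j, j ∈ O → (σ ^ s) j ∈ O) {j : C.ι} (hj : j ∈ O) {l : ℕ} (h : C.B j l N) :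
    C.TypeO O N := by
  intro i hi g
  obtain ⟨⟨p, hp⟩, -⟩ := h
  obtain ⟨g', hg'⟩ := Module.projective_lifting_property p g hp
  by_contra h0
  have : g' ≠ 0 := by
    rintro rfl
    apply h0
    rw [← hg', LinearMap.comp_zero]
  obtain ⟨s, hs⟩ := hom_orbit hσ g' this
  exact hi (hs ▸ hO s j hj)

theorem split {σ : Equiv.Perm C.ι} (hNak : IsNakayama A) (hσ : Ext σ) {O : Set C.ι}
    (hO : ∀ (s : ℕ) j, (σ ^ s) j ∈ O ↔ j ∈ O) (M : Type) [AddCommGroup M] [Module A M]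
    [Module.Finite A M] :
    ∃ (X Y : ModuleCat.{0} A), C.TypeO O X ∧ C.TypeO Oᶜ Y ∧ Nonempty (M ≃ₗ[A] X × Y) := by
  revert M
  intro M _ _ _
  refine decomp_induction (A := A) (fun M _ _ => ∃ (X Y : ModuleCat.{0} A),
    C.TypeO O X ∧ C.TypeO Oᶜ Y ∧ Nonempty (M ≃ₗ[A] X × Y)) ?_ ?_ ?_ M
  · intro M _ _ hM
    exact ⟨ModuleCat.of A PUnit, ModuleCat.of A PUnit, TypeO_sub (inferInstanceAs (Subsingleton PUnit)),
      TypeO_sub (inferInstanceAs (Subsingleton PUnit)), ⟨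
        { toFun := fun _ => 0, invFun := fun _ => 0, map_add' := by simp, map_smul' := by simp,
          left_inv := fun x => Subsingleton.elim _ _
          right_inv := fun x => rfl }⟩⟩
  · intro M _ _ hf hi
    have hu := indec_uni hNak M hf hi
    have hn : Nontrivial M := hi.1
    obtain ⟨j, hj⟩ := B_of_uni (C := C) hu
    by_cases hjO : j ∈ O
    · refine ⟨ModuleCat.of A M, ModuleCat.of A PUnit,
        TypeO_B hσ (fun s j => (hO s j).2) hjO hj, TypeO_sub (inferInstanceAs (Subsingleton PUnit)),
        ⟨(LinearEquiv.prodUnique (R := A) (M := M) (M₂ := PUnit)).symm⟩⟩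
    · refine ⟨ModuleCat.of A PUnit, ModuleCat.of A M, 
        TypeO_sub (inferInstanceAs (Subsingleton PUnit)),
        TypeO_B hσ (fun s j h => by rw [Set.mem_compl_iff, hO s j]; exact h) hjO hj, 
        ⟨(LinearEquiv.uniqueProd (R := A) (M := M) (M₂ := PUnit)).symm⟩⟩
  · intro M _ _ N₁ N₂ hf hc h1 h2
    obtain ⟨X₁, Y₁, hX₁, hY₁, ⟨e₁⟩⟩ := h1
    obtain ⟨X₂, Y₂, hX₂, hY₂, ⟨e₂⟩⟩ := h2
    exact ⟨ModuleCat.of A (X₁ × X₂), ModuleCat.of A (Y₁ × Y₂), hX₁.prod hX₂, hY₁.prod hY₂,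
      ⟨(Submodule.prodEquivOfIsCompl N₁ N₂ hc).symm.trans ((e₁.prodCongr e₂).trans
        (LinearEquiv.prodProdProdComm A X₁ Y₁ X₂ Y₂))⟩⟩

theorem gen {X Y : Type} [AddCommGroup X] [Module A X] [AddCommGroup Y] [Module A Y]
    (h : X →ₗ[A] Y) (h0 : h ≠ 0) : ∃ (i : C.ι) (f : C.P i →ₗ[A] X), h ∘ₗ f ≠ 0 := by
  obtain ⟨x, hx⟩ : ∃ x, h x ≠ 0 := by
    by_contra! hcon
    exact h0 (LinearMap.ext hcon)
  let W := Submodule.span A {x}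
  let h' := (h ∘ₗ W.subtype).rangeRestrict
  have hf : Module.Finite A (LinearMap.range (h ∘ₗ W.subtype)) := inferInstance
  have hn : Nontrivial (LinearMap.range (h ∘ₗ W.subtype)) := by
    rw [Submodule.nontrivial_iff_ne_bot]
    intro e
    have : h x ∈ LinearMap.range (h ∘ₗ W.subtype) :=
      ⟨⟨x, Submodule.mem_span_singleton_self x⟩, rfl⟩
    rw [e, Submodule.mem_bot] at this
    exact hx this
  obtain ⟨i, g, hg⟩ := C.top_exists (M := LinearMap.range (h ∘ₗ W.subtype))
  obtain ⟨f, hf⟩ := Module.projective_lifting_property (g ∘ₗ h') (C.π i)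
    (hg.comp (LinearMap.surjective_rangeRestrict _))
  refine ⟨i, W.subtype ∘ₗ f, fun e => ?_⟩
  have : Nontrivial (C.S i) := IsSimpleModule.nontrivial A _
  obtain ⟨y, hy⟩ := exists_ne (0 : C.S i)
  obtain ⟨z, rfl⟩ := C.hπ i y
  apply hy
  rw [← hf]
  have hz : h' (f z) = 0 := Subtype.ext (LinearMap.congr_fun e z)
  simp only [LinearMap.comp_apply]
  rw [hz, map_zero]

theorem hom_zero {O O' : Set C.ι} (hd : ∀ i, i ∈ O → i ∉ O') (hM : C.TypeO O M)
    (hN : C.TypeO O' N) (h : M →ₗ[A] N) : h = 0 := by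
  by_contra h0
  obtain ⟨i, f, hf⟩ := gen (C := C) h h0
  by_cases hi : i ∈ O
  · exact hf (hN i (hd i hi) _)
  · rw [hM i hi f, LinearMap.comp_zero] at hf
    exact hf rfl

theorem central {X Y : Type} [AddCommGroup X] [Module A X] [AddCommGroup Y] [Module A Y]
    (hConn : IsConnectedAlgebra A) (e : A ≃ₗ[A] X × Y) (h1 : ∀ h : X →ₗ[A] Y, h = 0)
    (h2 : ∀ h : Y →ₗ[A] X, h = 0) : Subsingleton X ∨ Subsingleton Y := by
  let ε : A →ₗ[A] A := e.symm.toLinearMap ∘ₗ LinearMap.inl A X Y ∘ₗ LinearMap.fst A X Y ∘ₗ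
    e.toLinearMap
  have hε : ∀ a, ε a = e.symm ((e a).1, 0) := fun a => rfl
  have hmul : ∀ a, ε a = a * ε 1 := by
    intro a
    have := ε.map_smul a 1
    rwa [smul_eq_mul, smul_eq_mul, mul_one] at this
  have hcomm : ∀ b a, ε (a * b) = ε a * b := by
    intro b a
    let ρ : A →ₗ[A] A := LinearMap.toSpanSingleton A A b
    have hρ : ∀ a, ρ a = a * b := fun a => rfl
    have k1 : ∀ x, (e (ρ (e.symm (x, 0)))).2 = 0 := fun x =>
      LinearMap.congr_fun (h1 (LinearMap.snd A X Y ∘ₗ e.toLinearMap ∘ₗ ρ ∘ₗ e.symm.toLinearMap ∘ₗ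
        LinearMap.inl A X Y)) x
    have k2 : ∀ y, (e (ρ (e.symm (0, y)))).1 = 0 := fun y =>
      LinearMap.congr_fun (h2 (LinearMap.fst A X Y ∘ₗ e.toLinearMap ∘ₗ ρ ∘ₗ e.symm.toLinearMap ∘ₗ
        LinearMap.inr A X Y)) y
    rw [← hρ, ← hρ]
    have ha : a = e.symm ((e a).1, 0) + e.symm (0, (e a).2) := by
      rw [← map_add]; simp
    apply e.injective
    rw [hε, hε, LinearEquiv.apply_symm_apply]
    apply Prod.ext
    · conv_lhs => rw [ha]
      rw [map_add, map_add, Prod.fst_add, k2, add_zero]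
    · exact (k1 _).symm
  have hidem : IsIdempotentElem (ε 1) := by
    unfold IsIdempotentElem
    rw [← hmul, hε (ε 1), hε 1, LinearEquiv.apply_symm_apply]
  have hcen : ε 1 ∈ Set.center A := by
    rw [Semigroup.mem_center_iff]
    intro b
    rw [← hmul, ← hcomm, one_mul]
  rcases hConn.2 _ hidem hcen with h | h
  · left
    refine ⟨fun x y => ?_⟩
    have aux : ∀ x : X, x = 0 := by
      intro x
      have := hmul (e.symm (x, 0))
      rw [h, mul_zero, hε, LinearEquiv.apply_symm_apply] at this
      have := congrArg e this
      rw [LinearEquiv.apply_symm_apply, map_zero] at this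
      exact congrArg Prod.fst this
    rw [aux x, aux y]
  · right
    refine ⟨fun x y => ?_⟩
    have aux : ∀ x : Y, x = 0 := by
      intro x
      have := hmul (e.symm (0, x))
      rw [h, mul_one, hε, LinearEquiv.apply_symm_apply] at this
      have := congrArg e this
      rw [LinearEquiv.apply_symm_apply, LinearEquiv.apply_symm_apply] at this
      exact (congrArg Prod.snd this).symm
    rw [aux x, aux y]

theorem nz_A (i : C.ι) : ∃ f : C.P i →ₗ[A] A, f ≠ 0 := by
  have : Nontrivial (C.S i) := IsSimpleModule.nontrivial A _
  obtain ⟨y, hy⟩ := exists_ne (0 : C.S i)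
  obtain ⟨f, hf⟩ := Module.projective_lifting_property (LinearMap.toSpanSingleton A (C.S i) y)
    (C.π i) (IsSimpleModule.toSpanSingleton_surjective A hy)
  refine ⟨f, ?_⟩
  rintro rfl
  rw [LinearMap.comp_zero] at hf
  obtain ⟨z, rfl⟩ := C.hπ i y
  exact hy (LinearMap.congr_fun hf z).symm

theorem connected {σ : Equiv.Perm C.ι} (hNak : IsNakayama A) (hConn : IsConnectedAlgebra A)
    (hσ : Ext σ) (i j : C.ι) : σ.SameCycle i j := by
  let O : Set C.ι := {k | σ.SameCycle i k}
  have hO : ∀ (s : ℕ) j, (σ ^ s) j ∈ O ↔ j ∈ O := fun s j => Equiv.Perm.sameCycle_pow_right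
  obtain ⟨X, Y, hX, hY, ⟨e⟩⟩ := split hNak hσ hO A
  rcases central hConn e (hom_zero (O := O) (O' := Oᶜ) (fun i hi hi' => hi' hi) hX hY)
    (hom_zero (O := Oᶜ) (O' := O) (fun i hi hi' => hi hi') hY hX) with h | h
  · have hA : C.TypeO Oᶜ A := by
      refine hY.inj (LinearMap.snd A X Y ∘ₗ e.toLinearMap) ?_
      intro a b hab
      exact e.injective (Prod.ext (Subsingleton.elim _ _) hab)
    exfalso
    obtain ⟨f, hf⟩ := nz_A (C := C) i
    exact hf (hA i (fun h => h (Equiv.Perm.SameCycle.refl σ i)) f)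
  · have hA : C.TypeO O A := by
      refine hX.inj (LinearMap.fst A X Y ∘ₗ e.toLinearMap) ?_
      intro a b hab
      exact e.injective (Prod.ext hab (Subsingleton.elim _ _))
    by_contra hj
    obtain ⟨f, hf⟩ := nz_A (C := C) j
    exact hf (hA j hj f)

end Ctx
end NakAux
end

open CategoryTheory CategoryTheory.Limits

noncomputable section
set_option linter.unusedSectionVars false
namespace NakAux
open ArtinAlg

variable {A : Type} [Ring A] [IsArtinianRing A]

namespace Ctx
variable {C : Ctx A}
variable {M N : Type} [AddCommGroup M] [Module A M] [AddCommGroup N] [Module A N]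

variable (C) in
/-- The Kupisch function on the integers. -/
def ff (σ : Equiv.Perm C.ι) (i0 : C.ι) (t : ℤ) : ℤ := t + (len A (C.P ((σ ^ t) i0)) : ℤ)

variable {σ : Equiv.Perm C.ι} {i0 : C.ι}

theorem lenP_pos (i : C.ι) : 0 < len A (C.P i) := by
  have := len_ker (C := C) i
  omega

theorem ff_lt (t : ℤ) : t < C.ff σ i0 t := by
  have := lenP_pos (C := C) ((σ ^ t) i0)
  unfold ff
  omega

theorem x_add (t : ℤ) (s : ℕ) : (σ ^ (t + s)) i0 = (σ ^ s) ((σ ^ t) i0) := by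
  rw [add_comm, zpow_add, Equiv.Perm.mul_apply, zpow_natCast]

theorem lenP_step (hσ : Ext σ) (i : C.ι) : len A (C.P i) ≤ len A (C.P (σ i)) + 1 := by
  by_cases h : 2 ≤ len A (C.P i)
  · obtain ⟨l, hl⟩ := Nat.exists_eq_add_of_le h
    obtain ⟨p, hp⟩ := exists_sub (A := A) (l + 1) (C.P i) (by omega)
    have hB := B_P (C := C) i
    have e : len A (C.P i) = l + 1 + 1 := by omega
    rw [e] at hB
    obtain ⟨j, hj, hj'⟩ := hB.step p hp (by omega)
    have := hj'.le
    rw [hσ i j hj]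
    omega
  · omega

theorem ff_mono (hσ : Ext σ) : Monotone (C.ff σ i0) := by
  apply monotone_int_of_le_succ
  intro t
  have h := lenP_step hσ ((σ ^ t) i0)
  have e := x_add (C := C) (σ := σ) (i0 := i0) t 1
  rw [pow_one, Nat.cast_one] at e
  unfold ff
  rw [e]
  omega

theorem ff_per (t : ℤ) : C.ff σ i0 (t + (orderOf σ : ℕ)) = C.ff σ i0 t + (orderOf σ : ℕ) := by
  unfold ff
  rw [zpow_add, zpow_natCast, pow_orderOf_eq_one, mul_one]
  ring

theorem proj_iff {i : C.ι} {l : ℕ} (h : C.B i l M) (hl : 0 < l) :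
    Module.Projective A M ↔ l = len A (C.P i) := by
  have hf := h.finite
  have hn : Nontrivial M := len_pos.1 (by rw [h.2]; omega)
  obtain ⟨⟨g, hg⟩, hlen⟩ := h
  have h1 := len_surj g hg
  constructor
  · intro hp
    obtain ⟨s, hs⟩ := Module.projective_lifting_property g LinearMap.id hg
    have hs' : ∀ x, g (s x) = x := fun x => LinearMap.congr_fun hs x
    have hk : LinearMap.ker g = ⊥ := by
      rcases C.hPuni i (LinearMap.ker g) (LinearMap.range s) with h | h
      · rw [eq_bot_iff]
        intro x hx
        obtain ⟨y, rfl⟩ := h hx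
        have : g (s y) = 0 := hx
        rw [hs'] at this
        simp [this]
      · exfalso
        obtain ⟨y, hy⟩ := exists_ne (0 : M)
        have : g (s y) = 0 := h ⟨y, rfl⟩
        rw [hs'] at this
        exact hy this
    have : len A (LinearMap.ker g) = 0 := by rw [hk]; exact len_bot
    omega
  · intro he
    have hb := bij_of_surj_len g hg (by omega)
    exact Module.Projective.of_equiv (LinearEquiv.ofBijective g hb)

theorem PD_formula (hσ : Ext σ) (p : ℕ) : ∀ (t : ℤ) (l : ℕ) (M : Type) [AddCommGroup M]
    [Module A M], 0 < l → C.B ((σ ^ t) i0) l M →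
    (PD A p M ↔ ∃ q ≤ p, sq (C.ff σ i0) (q + 1) t (t + l) = sq (C.ff σ i0) (q + 2) t (t + l)) := by
  have hz : ∀ (t : ℤ) (l : ℕ), sq (C.ff σ i0) (0 + 1) t (t + l) = sq (C.ff σ i0) (0 + 2) t (t + l)
      ↔ l = len A (C.P ((σ ^ t) i0)) := by
    intro t l
    rw [show (0 + 2 : ℕ) = 0 + 1 + 1 from rfl]
    simp only [sq_succ, sq_zero]
    unfold ff
    omega
  induction p with
  | zero =>
    intro t l M _ _ hl h
    rw [PD_zero_iff, proj_iff h hl, ← hz]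
    constructor
    · intro h; exact ⟨0, le_rfl, h⟩
    · rintro ⟨q, hq, h⟩
      obtain rfl : q = 0 := by omega
      exact h
  | succ p ih =>
    intro t l M _ _ hl h
    by_cases hc : l = len A (C.P ((σ ^ t) i0))
    · have hp := (proj_iff h hl).2 hc
      have : PD A (p + 1) M := PD_mono (Nat.zero_le _) (PD_zero_iff.2 hp)
      exact ⟨fun _ => ⟨0, Nat.zero_le _, (hz t l).2 hc⟩, fun _ => this⟩
    have hle := h.le
    have hlt : l < len A (C.P ((σ ^ t) i0)) := lt_of_le_of_ne hle hc
    obtain ⟨⟨g, hg⟩, hlen⟩ := h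
    have h1 := len_surj g hg
    obtain ⟨d, hd⟩ := Nat.exists_eq_add_of_le hle
    have hk : len A (LinearMap.ker g) = d := by omega
    have hB := B_P (C := C) ((σ ^ t) i0)
    have e : len A (C.P ((σ ^ t) i0)) = d + l := by omega
    rw [e] at hB
    have hB' := B.chain hσ l (by omega) hB (LinearMap.ker g) hk
    rw [← x_add] at hB'
    rw [PD_succ_iff g hg (C.hPproj _) p, ih (t + l) d _ (by omega) hB']
    have hft : C.ff σ i0 t = t + l + d := by unfold ff; omega
    have s1 : ∀ n, sq (C.ff σ i0) (n + 1) t (t + l) = sq (C.ff σ i0) n (t + l) (t + l + d) := by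
      intro n; rw [sq_succ, hft]
    constructor
    · rintro ⟨q, hq, h⟩
      refine ⟨q + 1, by omega, ?_⟩
      exact (s1 (q + 1)).trans (h.trans (s1 (q + 2)).symm)
    · rintro ⟨q, hq, h⟩
      cases q with
      | zero => exact absurd ((hz t l).1 h) hc
      | succ q =>
        refine ⟨q, by omega, ?_⟩
        exact (s1 (q + 1)).symm.trans (h.trans (s1 (q + 2)))

end Ctx
end NakAux
end

open CategoryTheory CategoryTheory.Limits

noncomputable section
set_option linter.unusedSectionVars false
namespace NakAux
open ArtinAlg

variable {A : Type} [Ring A] [IsArtinianRing A]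

namespace Ctx
variable {C : Ctx A}

theorem len_bound (C : Ctx A) : ∃ b : ℕ, ∀ (V : Type) [AddCommGroup V] [Module A V], Module.Finite A V →
    Uni A V → Nontrivial V → len A V ≤ b := by
  refine ⟨∑ i : C.ι, len A (C.P i), ?_⟩
  intro V _ _ hf hu hn
  obtain ⟨i, hi⟩ := B_of_uni (C := C) hu
  exact hi.le.trans (Finset.single_le_sum (f := fun i => len A (C.P i))
    (fun _ _ => Nat.zero_le _) (Finset.mem_univ i))

theorem exists_max_ext (C : Ctx A) {M : Type} [AddCommGroup M] [Module A M] [Module.Finite A M]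
    [Nontrivial M] (hM : Uni A M) :
    ∃ U : ModuleCat.{0} A, Module.Finite A U ∧ Uni A U ∧
      (∃ j : M →ₗ[A] U, Function.Injective j) ∧
      ∀ (V : Type) [AddCommGroup V] [Module A V], Module.Finite A V → Uni A V →
        (∃ j : U →ₗ[A] V, Function.Injective j) → len A V ≤ len A U := by
  classical
  obtain ⟨b, hb⟩ := len_bound C
  let p : ℕ → Prop := fun l => ∃ U : ModuleCat.{0} A, Module.Finite A U ∧ Uni A U ∧
      (∃ j : M →ₗ[A] U, Function.Injective j) ∧ len A U = l
  have hp : p (len A M) := ⟨ModuleCat.of A M, inferInstanceAs (Module.Finite A M), hM,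
    ⟨LinearMap.id, Function.injective_id⟩, rfl⟩
  have hL := Nat.findGreatest_spec (hb M inferInstance hM inferInstance) hp
  obtain ⟨U, hUf, hUu, ⟨j, hj⟩, hUl⟩ := hL
  refine ⟨U, hUf, hUu, ⟨j, hj⟩, ?_⟩
  intro V _ _ hVf hVu ⟨j', hj'⟩
  rw [hUl]
  have hV : Nontrivial V := (hj'.comp hj).nontrivial
  exact Nat.le_findGreatest (hb V hVf hVu hV)
    ⟨ModuleCat.of A V, hVf, hVu, ⟨j' ∘ₗ j, hj'.comp hj⟩, rfl⟩

theorem odd_case {σ : Equiv.Perm C.ι} (hσ : Ext σ) (hcon : ∀ i j, σ.SameCycle i j)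
    {Q : Type} [AddCommGroup Q] [Module A Q]
    (hNak : IsNakayama A) (hQ : Module.Injective A Q)
    (hcog : ∀ (T : Type) [AddCommGroup T] [Module A T], IsSimpleModule A T →
      ∃ s : T →ₗ[A] Q, Function.Injective s) {nQ : ℕ} (hQpd : PD A nQ Q) (k : ℕ)
    (hmax : ∀ (V : Type) [AddCommGroup V] [Module A V], Module.Finite A V → Uni A V →
      Nontrivial V → (∃ n, PD A n V) → PD A (2 * k + 1) V)
    {M : Type} [AddCommGroup M] [Module A M] (hMf : Module.Finite A M) (hMn : Nontrivial M)
    (hMu : Uni A M) (hM1 : PD A (2 * k + 1) M) (hM2 : ¬ PD A (2 * k) M) (t : C.ι) :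
    ∃ n, PD A n (C.S t) := by
  obtain ⟨U, hUf, hUu, ⟨j, hj⟩, hUmax⟩ := exists_max_ext C hMu
  have hUn : Nontrivial U := hj.nontrivial
  obtain ⟨iU, rU, hiU⟩ := max_summand hNak hQ hcog hUu hUmax
  have hUpd : PD A (2 * k + 1) U := hmax U hUf hUu hUn ⟨nQ, PD_retract iU rU hiU hQpd⟩
  obtain ⟨y, hy⟩ := B_of_uni (C := C) hUu
  set L := len A U with hL
  have hy0 : C.B ((σ ^ (0 : ℤ)) y) L U := by rw [zpow_zero]; exact hy
  have hMpos : 0 < len A M := len_pos.2 hMn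
  have hLM : len A M ≤ L := len_inj j hj
  obtain ⟨s, hs⟩ := Nat.exists_eq_add_of_le hLM
  let eM := LinearEquiv.ofInjective j hj
  have hMB : C.B ((σ ^ (s : ℤ)) y) (len A M) M := by
    have h1 := hy
    rw [hs] at h1
    have h2 := B.chain hσ s hMpos h1 (LinearMap.range j) (len_equiv eM).symm
    rw [zpow_natCast]
    exact h2.equiv eM.symm
  have hmono := ff_mono (i0 := y) hσ
  have hlt := ff_lt (C := C) (σ := σ) (i0 := y)
  have hcm := comb_main (C.ff σ y) k 0 s (s + len A M) (by omega) (by omega)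
    (by
      by_contra hcon'
      have hz : L + 1 ≤ len A (C.P ((σ ^ ((0 : ℤ) - 1)) y)) := by
        unfold ff at hcon'
        omega
      obtain ⟨p, hp⟩ := B_exists _ _ hz
      have hpf := hp.finite
      obtain ⟨q, hq⟩ := exists_sub (A := A) L (C.P ((σ ^ ((0 : ℤ) - 1)) y) ⧸ p)
        (by rw [hp.2]; omega)
      have h2 := B.chain hσ 1 (by omega) hp q hq
      have e : (σ ^ 1) ((σ ^ ((0 : ℤ) - 1)) y) = y := by simp
      rw [e] at h2
      obtain ⟨e'⟩ := hy.iso h2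
      have h3 := hUmax _ hpf hp.uni ⟨q.subtype ∘ₗ e'.toLinearMap,
        Subtype.val_injective.comp e'.injective⟩
      rw [hp.2] at h3
      omega)
    hmono hlt
    (by
      obtain ⟨q, hq, h⟩ := (PD_formula hσ (2 * k + 1) s _ M hMpos hMB).1 hM1
      have hq' : q = 2 * k + 1 := by
        by_contra hne
        exact hM2 ((PD_formula hσ (2 * k) s _ M hMpos hMB).2 ⟨q, by omega, h⟩)
      subst hq'
      rw [show 2 * k + 1 + 1 = 2 * (k + 1) by ring, show 2 * k + 1 + 2 = 2 * (k + 1) + 1 by ring,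
        sq_even, sq_odd] at h
      exact h)
    (by
      intro q hq h
      exact hM2 ((PD_formula hσ (2 * k) s _ M hMpos hMB).2 ⟨q, by omega, h⟩))
    (by
      have := (PD_formula hσ (2 * k + 1) 0 _ U (by omega) hy0).1 hUpd
      rw [hs] at this
      push_cast at this
      rwa [zero_add, add_comm (len A M : ℤ)] at this)
    (by
      rintro hs0 ⟨q, hq⟩
      have hs0' : 0 < s := by omega
      obtain ⟨p, hp⟩ := B_exists (C := C) ((σ ^ (0 : ℤ)) y) s (by have := hy0.le; omega)
      have hpf := hp.finite
      have h1 := PD_formula (i0 := y) hσ q 0 s _ hs0' hp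
      rw [zero_add] at h1
      have h2 := PD_formula (i0 := y) hσ (2 * k + 1) 0 s _ hs0' hp
      rw [zero_add] at h2
      exact h2.1 (hmax _ hpf hp.uni (len_pos.1 (by rw [hp.2]; omega))
        ⟨q, h1.2 ⟨q, le_rfl, hq⟩⟩))
  obtain ⟨u, hu⟩ := hcon y t
  have hord : 0 < orderOf σ := orderOf_pos σ
  obtain ⟨m, hm⟩ := comb (C.ff σ y) (orderOf σ) hord hmono ff_per hlt _ _ hcm u
  have hB : C.B ((σ ^ u) y) 1 (C.S t) := by rw [hu]; exact B_S t
  rcases hm with hm | hm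
  · cases m with
    | zero => exfalso; simp at hm
    | succ m =>
      refine ⟨2 * m + 1, (PD_formula hσ _ u 1 _ one_pos hB).2 ⟨2 * m + 1, le_rfl, ?_⟩⟩
      rw [show 2 * m + 1 + 1 = 2 * (m + 1) by ring, show 2 * m + 1 + 2 = 2 * (m + 1) + 1 by ring,
        sq_even, sq_odd]
      exact_mod_cast hm
  · refine ⟨2 * m, (PD_formula hσ _ u 1 _ one_pos hB).2 ⟨2 * m, le_rfl, ?_⟩⟩
    rw [show 2 * m + 2 = 2 * (m + 1) by ring, sq_even, sq_odd]
    exact_mod_cast hm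

theorem pd_all (h : ∀ t : C.ι, ∃ n, PD A n (C.S t)) :
    ∃ n, ∀ (M : Type) [AddCommGroup M] [Module A M], PD A n M := by
  choose n hn using h
  refine ⟨∑ i, n i, fun M _ _ => PD_of_simple _ (fun S _ _ hS => ?_) M⟩
  obtain ⟨i, ⟨e⟩⟩ := C.hSex S hS
  exact PD_mono (Finset.single_le_sum (f := n) (fun _ _ => Nat.zero_le _) (Finset.mem_univ i))
    (PD_equiv e.symm (hn i))

theorem pd_bound (C : Ctx A) : ∃ b : ℕ, ∀ (V : Type) [AddCommGroup V] [Module A V],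
    Module.Finite A V → Uni A V → Nontrivial V → (∃ n, PD A n V) → PD A b V := by
  have h : ∀ x : (Σ i : C.ι, Fin (len A (C.P i) + 1)), ∃ b : ℕ, ∀ (V : Type) [AddCommGroup V]
      [Module A V], C.B x.1 x.2 V → (∃ n, PD A n V) → PD A b V := by
    intro x
    by_cases hx : ∃ (V : ModuleCat.{0} A) (n : ℕ), C.B x.1 x.2 V ∧ PD A n V
    · obtain ⟨V, n, hV, hn⟩ := hx
      refine ⟨n, fun W _ _ hW _ => ?_⟩
      obtain ⟨e⟩ := hV.iso hW
      exact PD_equiv e hn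
    · exact ⟨0, fun W _ _ hW ⟨n, hn⟩ => absurd ⟨ModuleCat.of A W, n, hW, hn⟩ hx⟩
  choose b hb using h
  refine ⟨∑ x, b x, fun V _ _ hf hu hn hpd => ?_⟩
  obtain ⟨i, hi⟩ := B_of_uni (C := C) hu
  exact PD_mono (Finset.single_le_sum (f := b) (fun _ _ => Nat.zero_le _)
    (Finset.mem_univ ⟨i, ⟨len A V, Nat.lt_succ_of_le hi.le⟩⟩)) (hb _ V hi hpd)

end Ctx

theorem exists_cover (hNak : IsNakayama A) (S : Type) [AddCommGroup S] [Module A S]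
    [IsSimpleModule A S] : ∃ P : ModuleCat.{0} A, Module.Finite A P ∧ Uni A P ∧
      Module.Projective A P ∧ ∃ g : P →ₗ[A] S, Function.Surjective g := by
  have hSn : Nontrivial S := IsSimpleModule.nontrivial A S
  have key := decomp_induction (A := A) (fun X _ _ => Module.Projective A X →
    (∃ g : X →ₗ[A] S, Function.Surjective g) → ∃ P : ModuleCat.{0} A, Module.Finite A P ∧ Uni A P ∧
      Module.Projective A P ∧ ∃ g : P →ₗ[A] S, Function.Surjective g)
    (by
      rintro X _ _ hX - ⟨g, hg⟩
      exact absurd (hg.nontrivial) (not_nontrivial_iff_subsingleton.2 hX))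
    (by
      intro X _ _ hf hi hp hg
      exact ⟨ModuleCat.of A X, hf, indec_uni hNak X hf hi, hp, hg⟩)
    (by
      intro X _ _ N₁ N₂ hf hc h1 h2 hp ⟨g, hg⟩
      have hp1 : Module.Projective A N₁ := Module.Projective.of_split N₁.subtype
        (N₁.projectionOnto N₂ hc) (by ext x; simp)
      have hp2 : Module.Projective A N₂ := Module.Projective.of_split N₂.subtype
        (N₂.projectionOnto N₁ hc.symm) (by ext x; simp)
      rcases (LinearMap.surjective_or_eq_zero (g ∘ₗ N₁.subtype)) with h | h
      · exact h1 hp1 ⟨_, h⟩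
      rcases (LinearMap.surjective_or_eq_zero (g ∘ₗ N₂.subtype)) with h' | h'
      · exact h2 hp2 ⟨_, h'⟩
      exfalso
      obtain ⟨y, hy⟩ := exists_ne (0 : S)
      obtain ⟨x, rfl⟩ := hg y
      have hx : x ∈ N₁ ⊔ N₂ := by rw [hc.sup_eq_top]; trivial
      obtain ⟨a, ha, b, hb, rfl⟩ := Submodule.mem_sup.1 hx
      apply hy
      have e1 : g a = 0 := LinearMap.congr_fun h ⟨a, ha⟩
      have e2 : g b = 0 := LinearMap.congr_fun h' ⟨b, hb⟩
      rw [map_add, e1, e2, add_zero])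
  obtain ⟨y, hy⟩ := exists_ne (0 : S)
  exact key A inferInstance ⟨LinearMap.toSpanSingleton A S y,
    IsSimpleModule.toSpanSingleton_surjective A hy⟩

theorem exists_ctx (hNak : IsNakayama A) (ι : Type) (hι : Fintype ι) (S : ι → ModuleCat.{0} A)
    (hS : ∀ i, IsSimpleModule A (S i))
    (hS' : ∀ T : ModuleCat.{0} A, IsSimpleModule A ↥T → ∃! i, Nonempty (↥T ≃ₗ[A] ↥(S i))) :
    Nonempty (Ctx A) := by
  have h : ∀ i, _ := fun i => exists_cover hNak (S i)
  choose P h1 h2 h3 g hg using h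
  exact ⟨{
    ι := ι
    fin := hι
    S := S
    P := P
    hS := hS
    hSex := fun T _ _ hT => (hS' (ModuleCat.of A T) hT).exists
    hSu := fun i j hij => (hS' (S i) (hS i)).unique ⟨LinearEquiv.refl A _⟩ hij
    hPfin := h1
    hPuni := h2
    hPproj := h3
    π := g
    hπ := hg }⟩

theorem pd_fg (hNak : IsNakayama A) {m : ℕ}
    (hm : ∀ (V : Type) [AddCommGroup V] [Module A V],
      Module.Finite A V → Uni A V → Nontrivial V → (∃ n, PD A n V) → PD A m V)
    (M : Type) [AddCommGroup M] [Module A M] [Module.Finite A M] : (∃ n, PD A n M) → PD A m M := by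
  refine decomp_induction (A := A) (fun M _ _ => (∃ n, PD A n M) → PD A m M) ?_ ?_ ?_ M
  · intro M _ _ h _
    exact PD_of_subsingleton m
  · intro M _ _ hf hi h
    exact hm M hf (indec_uni hNak M hf hi) hi.1 h
  · intro M _ _ N₁ N₂ hf hc h1 h2 ⟨n, hn⟩
    have hp1 := h1 ⟨n, PD_retract N₁.subtype (N₁.projectionOnto N₂ hc) (by ext x; simp) hn⟩
    have hp2 := h2 ⟨n, PD_retract N₂.subtype (N₂.projectionOnto N₁ hc.symm) (by ext x; simp) hn⟩
    exact PD_ext N₁ hp1 (PD_equiv (Submodule.quotientEquivOfIsCompl N₁ N₂ hc).symm hp2)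

theorem finPro_eq (hNak : IsNakayama A) {m : ℕ}
    (hm : ∀ (V : Type) [AddCommGroup V] [Module A V],
      Module.Finite A V → Uni A V → Nontrivial V → (∃ n, PD A n V) → PD A m V)
    (hm' : m ≠ 0 → ∃ V : ModuleCat.{0} A, Module.Finite A V ∧ PD A m V ∧ ¬ PD A (m - 1) V) :
    finProDim A = m := by
  unfold finProDim
  apply le_antisymm
  · apply sSup_le
    rintro d ⟨M, hf, rfl, hd⟩
    rw [projDim_le_iff]
    exact pd_fg hNak hm M ((projDim_ne_top_iff M).1 hd)
  · by_cases h0 : m = 0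
    · subst h0; simp
    obtain ⟨V, hVf, hV1, hV2⟩ := hm' h0
    apply le_sSup
    have hle := (projDim_le_iff m V).2 hV1
    refine ⟨V, hVf, ?_, ENat.natCast_ne_top m⟩
    obtain ⟨d, hd⟩ := ENat.ne_top_iff_exists.1 ((projDim_ne_top_iff V).2 ⟨m, hV1⟩)
    rw [← projDim_le_iff, ← hd] at hV2
    rw [← hd] at hle ⊢
    norm_cast at *
    omega

theorem main (hNak : IsNakayama A) (hConn : IsConnectedAlgebra A)
    (Q : ModuleCat.{0} A) (hQ : IsMinimalInjectiveCogenerator A Q)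
    (hQpd : projDim A Q ≠ ⊤)
    (hInf : ¬ ∃ n : ℕ, ∀ M : ModuleCat.{0} A, projDim A M ≤ n) :
    ∃ n : ℕ, finProDim A = n ∧ Even n := by
  classical
  obtain ⟨ι, hι, S, hS, hS', f, hfI, hfm, -⟩ := hQ
  obtain ⟨C⟩ := exists_ctx hNak ι hι S hS hS'
  have hQinj : Module.Injective A Q := Module.injective_module_of_injective_object A Q
  have hcog : ∀ (T : Type) [AddCommGroup T] [Module A T], IsSimpleModule A T →
      ∃ s : T →ₗ[A] Q, Function.Injective s := by
    intro T _ _ hT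
    obtain ⟨i, ⟨e⟩⟩ := (hS' (ModuleCat.of A T) hT).exists
    have e' : T ≃ₗ[A] S i := e
    have hf : Function.Injective f.hom := (ModuleCat.mono_iff_injective f).1 hfm
    exact ⟨f.hom ∘ₗ LinearMap.single A (fun i => (S i : Type)) i ∘ₗ e'.toLinearMap,
      hf.comp ((Pi.single_injective i).comp e'.injective)⟩
  obtain ⟨nQ, hnQ⟩ := (projDim_ne_top_iff Q).1 hQpd
  obtain ⟨σ, hσ⟩ := Ctx.exists_ext (C := C) hNak hQinj hcog
  have hcon := Ctx.connected hNak hConn hσ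
  have hb := C.pd_bound
  let m := Nat.find hb
  have hm := Nat.find_spec hb
  have hm' : m ≠ 0 → ∃ V : ModuleCat.{0} A, Module.Finite A V ∧ Uni A V ∧ Nontrivial V ∧
      PD A m V ∧ ¬ PD A (m - 1) V := by
    intro h0
    by_contra hne
    refine Nat.find_min hb (m := m - 1) (by omega) ?_
    intro V _ _ hf hu hn hpd
    by_contra hV
    exact hne ⟨ModuleCat.of A V, hf, hu, hn, hm V hf hu hn hpd, hV⟩
  refine ⟨m, finPro_eq hNak hm (fun h0 => ?_), ?_⟩
  · obtain ⟨V, hf, -, -, h1, h2⟩ := hm' h0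
    exact ⟨V, hf, h1, h2⟩
  · by_contra hodd
    rw [Nat.not_even_iff_odd] at hodd
    obtain ⟨k, hk⟩ := hodd
    obtain ⟨V, hf, hu, hn, h1, h2⟩ := hm' (by omega)
    rw [hk] at h1 h2
    have hmk : ∀ (V : Type) [AddCommGroup V] [Module A V], Module.Finite A V → Uni A V →
      Nontrivial V → (∃ n, PD A n V) → PD A (2 * k + 1) V := by
      rw [← hk]; exact hm
    obtain ⟨n, hn⟩ := Ctx.pd_all (Ctx.odd_case hσ hcon hNak hQinj hcog hnQ k hmk hf hn hu h1 h2)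
    exact hInf ⟨n, fun M => (projDim_le_iff n M).2 (hn M)⟩

end NakAux
end

open ArtinAlg in
/-- Let `A` be a connected Nakayama algebra which is Gorenstein (the
left regular module has finite injective dimension and the minimal injective cogenerator
has finite projective dimension) and has infinite global dimension. Then `fin-pro A`
is even. -/
theorem statement_14 (R : Type) [CommRing R] [IsArtinianRing R]
    (A : Type) [Ring A] [Algebra R A] [Module.Finite R A]
    (hNak : IsNakayama A) (hConn : IsConnectedAlgebra A)
    (Q : ModuleCat.{0} A) (hQ : IsMinimalInjectiveCogenerator A Q)
    (hQpd : projDim A Q ≠ ⊤) (hA : injDim A (ModuleCat.of A A) ≠ ⊤)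
    (hInf : ¬ ∃ n : ℕ, ∀ M : ModuleCat.{0} A, projDim A M ≤ n) :
    ∃ n : ℕ, finProDim A = n ∧ Even n := by
  have hArt : IsArtinianRing A := IsArtinianRing.of_finite R A
  exact NakAux.main hNak hConn Q hQ hQpd hInf
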